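/- arXiv:1612.08690 — 3 statements merged into one kernel-verified Lean document; each statement's English description precedes it below -/
import Mathlib

section
/- Let g ≥ 1. Then the minimal integer n ≥ 1 such that (β² − 64)ⁿ lies in the ideal J_g of ℂ[α,β,γ] is exactly 2⌈g/2⌉ − 1. (Via Muñoz's presentation of the instanton Floer homology ring I(Σ_g × S¹)'_w, this is equivalent to: the endomorphism u² − 64 of I(Σ_g × S¹)_w has nilpotency degree 2⌈g/2⌉ − 1.) -/
open MvPolynomial

/-- ζ_k ∈ ℂ[α,β,γ] (variables: X 0 = α, X 1 = β, X 2 = γ), defined by ζ_0 = 1 and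
    ζ_{k+1} = α ζ_k + k²(β + (−1)^k 8) ζ_{k−1} + 2k(k−1) γ ζ_{k−2}, with ζ_k = 0 for k < 0. -/
noncomputable def zeta : ℕ → MvPolynomial (Fin 3) ℂ
  | 0 => 1
  | 1 => X 0
  | 2 => X 0 * zeta 1 + (X 1 - C 8) * zeta 0
  | (n + 3) =>
      X 0 * zeta (n + 2)
        + C (((n : ℂ) + 2) ^ 2) * (X 1 + C ((-1) ^ (n + 2) * 8)) * zeta (n + 1)
        + C (2 * ((n : ℂ) + 2) * ((n : ℂ) + 1)) * X 2 * zeta n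

/-- J_g = (ζ_g, ζ_{g+1}, ζ_{g+2}) ⊆ ℂ[α,β,γ]. -/
noncomputable def J (g : ℕ) : Ideal (MvPolynomial (Fin 3) ℂ) :=
  Ideal.span {zeta g, zeta (g + 1), zeta (g + 2)}

theorem even_rec {B : Type*} [CommRing B] {α b γ : B} {z : ℕ → B}
    (hrec : ∀ n : ℕ, z (n + 3) = α * z (n + 2)
      + ((n : B) + 2) ^ 2 * (8 + b + (-1) ^ n * 8) * z (n + 1)
      + 2 * ((n : B) + 2) * ((n : B) + 1) * γ * z n) (j : ℕ) :
    z (2 * (j + 1) + 1) = α * z (2 * (j + 1)) + (2 * (j : B) + 2) ^ 2 * (16 + b) * z (2 * j + 1)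
      + 2 * (2 * (j : B) + 2) * (2 * (j : B) + 1) * γ * z (2 * j) := by
  have h := hrec (2 * j)
  rw [show 2 * (j + 1) + 1 = 2 * j + 3 by ring, show 2 * (j + 1) = 2 * j + 2 by ring, h]
  have : (-1 : B) ^ (2 * j) = 1 := by rw [pow_mul]; simp
  rw [this]; push_cast; ring

theorem odd_rec {B : Type*} [CommRing B] {α b γ : B} {z : ℕ → B}
    (hrec : ∀ n : ℕ, z (n + 3) = α * z (n + 2)
      + ((n : B) + 2) ^ 2 * (8 + b + (-1) ^ n * 8) * z (n + 1)
      + 2 * ((n : B) + 2) * ((n : B) + 1) * γ * z n) (j : ℕ) :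
    z (2 * (j + 2)) = α * z (2 * (j + 1) + 1) + (2 * (j : B) + 3) ^ 2 * b * z (2 * (j + 1))
      + 2 * (2 * (j : B) + 3) * (2 * (j : B) + 2) * γ * z (2 * j + 1) := by
  have h := hrec (2 * j + 1)
  rw [show 2 * (j + 2) = 2 * j + 1 + 3 by ring, show 2 * (j + 1) + 1 = 2 * j + 1 + 2 by ring,
    show 2 * (j + 1) = 2 * j + 1 + 1 by ring, h]
  have : (-1 : B) ^ (2 * j + 1) = -1 := by rw [pow_succ, pow_mul]; simp
  rw [this]; push_cast; ring

theorem pow_le_mem {B : Type*} [CommRing B] {m : Ideal B} {x : B} {i j : ℕ} (h : x ∈ m ^ i)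
    (hij : j ≤ i) : x ∈ m ^ j := Ideal.pow_le_pow_right hij h

theorem mul_mem_pow {B : Type*} [CommRing B] {m : Ideal B} {x y : B} {i j k : ℕ} (hx : x ∈ m ^ i)
    (hy : y ∈ m ^ j) (hk : k ≤ i + j) : x * y ∈ m ^ k :=
  pow_le_mem (by rw [pow_add]; exact Ideal.mul_mem_mul hx hy) hk

theorem mul_mem_pow1 {B : Type*} [CommRing B] {m : Ideal B} {x y : B} {j k : ℕ} (hx : x ∈ m)
    (hy : y ∈ m ^ j) (hk : k ≤ j + 1) : x * y ∈ m ^ k :=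
  mul_mem_pow (i := 1) (by simpa using hx) hy (by omega)

theorem orders {B : Type*} [CommRing B] {α b γ : B} {z : ℕ → B} {m : Ideal B}
    (hrec : ∀ n : ℕ, z (n + 3) = α * z (n + 2)
      + ((n : B) + 2) ^ 2 * (8 + b + (-1) ^ n * 8) * z (n + 1)
      + 2 * ((n : B) + 2) * ((n : B) + 1) * γ * z n)
    (z2 : z 2 = α * α + b)
    (hα : α ∈ m) (hb : b ∈ m) (hγ : γ ∈ m)
    (hu : IsUnit (16 + b)) (hn : ∀ n : ℕ, n ≠ 0 → IsUnit (n : B))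
    (G : ℕ) (hG : z (2 * G + 1) = 0) (n : ℕ) :
    ∀ j ≤ G, z (2 * j) ∈ m ^ (min j n) ∧ z (2 * j + 1) ∈ m ^ (min (j + 1) n) := by
  induction n with
  | zero => simp
  | succ n ih =>
    intro j hj
    constructor
    · match j, hj with
      | 0, _ => simp
      | 1, _ =>
        have : z (2 * 1) ∈ m := by
          rw [mul_one, z2]; exact m.add_mem (m.mul_mem_left _ hα) hb
        simpa using this
      | j + 2, hj =>
        rw [odd_rec hrec j]
        refine Ideal.add_mem _ (Ideal.add_mem _ ?_ ?_) ?_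
        · exact mul_mem_pow1 hα (ih (j + 1) (by omega)).2 (by omega)
        · rw [mul_assoc]
          exact Ideal.mul_mem_left _ _ (mul_mem_pow1 hb (ih (j + 1) (by omega)).1 (by omega))
        · rw [mul_assoc]
          exact Ideal.mul_mem_left _ _ (mul_mem_pow1 hγ (ih j (by omega)).2 (by omega))
    · obtain ⟨d, rfl⟩ := Nat.exists_eq_add_of_le hj
      clear hj
      induction d generalizing j with
      | zero => simp at hG; simp [hG]
      | succ d ihd =>
        have h1 := ihd (j + 1) (by rw [← hG]; congr 2; omega) (by
          rw [show j + 1 + d = j + (d + 1) by omega]; exact ih)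
        have hunit : IsUnit ((2 * (j : B) + 2) ^ 2 * (16 + b)) := by
          refine IsUnit.mul (IsUnit.pow _ ?_) hu
          exact_mod_cast hn (2 * j + 2) (by omega)
        rw [← Ideal.unit_mul_mem_iff_mem _ hunit]
        have e := even_rec hrec j
        have : (2 * (j : B) + 2) ^ 2 * (16 + b) * z (2 * j + 1) =
          z (2 * (j + 1) + 1) - α * z (2 * (j + 1))
            - 2 * (2 * (j : B) + 2) * (2 * (j : B) + 1) * (γ * z (2 * j)) := by
          rw [e]; ring
        rw [this]
        refine Ideal.sub_mem _ (Ideal.sub_mem _ ?_ ?_) ?_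
        · exact pow_le_mem h1 (by omega)
        · exact mul_mem_pow1 hα (ih (j + 1) (by omega)).1 (by omega)
        · exact Ideal.mul_mem_left _ _ (mul_mem_pow1 hγ (ih j (by omega)).1 (by omega))

theorem local_key {B : Type*} [CommRing B] [IsNoetherianRing B] {α b γ : B} {z : ℕ → B}
    {m : Ideal B} (hm : m = Ideal.span {α, b, γ}) (hjac : m ≤ Ideal.jacobson ⊥)
    (hrec : ∀ n : ℕ, z (n + 3) = α * z (n + 2)
      + ((n : B) + 2) ^ 2 * (8 + b + (-1) ^ n * 8) * z (n + 1)
      + 2 * ((n : B) + 2) * ((n : B) + 1) * γ * z n)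
    (z0 : z 0 = 1) (z1 : z 1 = α) (z2 : z 2 = α * α + b)
    (hu : IsUnit (16 + b)) (hn : ∀ n : ℕ, n ≠ 0 → IsUnit (n : B))
    (G : ℕ) (hG0 : 1 ≤ G) (hG1 : z (2 * G + 1) = 0) (hG2 : z (2 * (G + 1)) = 0)
    (hG3 : z (2 * (G + 1) + 1) = 0) (hb0 : b ^ (2 * G) = 0) : γ ^ (2 * G) = 0 := by
  have hα : α ∈ m := by rw [hm]; exact Ideal.subset_span (by simp)
  have hb : b ∈ m := by rw [hm]; exact Ideal.subset_span (by simp)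
  have hγ : γ ∈ m := by rw [hm]; exact Ideal.subset_span (by simp)
  have hγp : ∀ k, γ ^ k ∈ m ^ k := fun k => Ideal.pow_mem_pow hγ k
  have hP : ∀ j ≤ G, z (2 * j) ∈ m ^ j := fun j hj => by
    simpa using (orders hrec z2 hα hb hγ hu hn G hG1 j j hj).1
  have hO : ∀ j ≤ G, z (2 * j + 1) ∈ m ^ (j + 1) := fun j hj => by
    simpa using (orders hrec z2 hα hb hγ hu hn G hG1 (j + 1) j hj).2
  have hγP : γ * z (2 * G) = 0 := by
    have e := even_rec hrec G
    rw [hG1, hG2, hG3] at e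
    have h1 : IsUnit (2 * (2 * (G : B) + 2) * (2 * (G : B) + 1)) := by
      exact_mod_cast hn (2 * (2 * G + 2) * (2 * G + 1)) (by positivity)
    rw [← h1.mul_right_eq_zero]
    rw [← mul_assoc]; simpa using e.symm
  have hlead : ∀ j, j + 1 ≤ G →
      8 * (2 * (j : B) + 2) * z (2 * j + 1) + (2 * (j : B) + 1) * (γ * z (2 * j)) ∈ m ^ (j + 2) := by
    intro j hj
    have hunit : IsUnit (2 * (2 * (j : B) + 2)) := by
      exact_mod_cast hn (2 * (2 * j + 2)) (by omega)
    rw [← Ideal.unit_mul_mem_iff_mem _ hunit]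
    have : 2 * (2 * (j : B) + 2) * (8 * (2 * (j : B) + 2) * z (2 * j + 1) + (2 * (j : B) + 1) * (γ * z (2 * j)))
      = z (2 * (j + 1) + 1) - α * z (2 * (j + 1)) - (2 * (j : B) + 2) ^ 2 * (b * z (2 * j + 1)) := by
      rw [even_rec hrec j]; ring
    rw [this]
    refine Ideal.sub_mem _ (Ideal.sub_mem _ ?_ ?_) ?_
    · exact hO (j + 1) hj
    · exact mul_mem_pow1 hα (hP (j + 1) hj) (by omega)
    · exact Ideal.mul_mem_left _ _ (mul_mem_pow1 hb (hO j (by omega)) (by omega))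
  have hmain : ∀ j, j + 1 ≤ G →
      4 * (2 * (j : B) + 3) ^ 2 * (b * z (2 * (j + 1))) - 4 * z (2 * (j + 2))
        - (2 * (j : B) + 3) * (2 * (j : B) + 1) * (γ ^ 2 * z (2 * j)) ∈ m ^ (j + 3) := by
    intro j hj
    have : 4 * (2 * (j : B) + 3) ^ 2 * (b * z (2 * (j + 1))) - 4 * z (2 * (j + 2))
        - (2 * (j : B) + 3) * (2 * (j : B) + 1) * (γ ^ 2 * z (2 * j)) =
        - (4 * (α * z (2 * (j + 1) + 1))) - (2 * (j : B) + 3) * (γ *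
          (8 * (2 * (j : B) + 2) * z (2 * j + 1) + (2 * (j : B) + 1) * (γ * z (2 * j)))) := by
      rw [odd_rec hrec j]; ring
    rw [this]
    refine Ideal.sub_mem _ (neg_mem (Ideal.mul_mem_left _ _ ?_)) (Ideal.mul_mem_left _ _ ?_)
    · exact mul_mem_pow1 hα (hO (j + 1) hj) (by omega)
    · exact mul_mem_pow1 hγ (hlead j hj) (by omega)
  have hmain0 : b * z (2 * 0) - z (2 * 1) ∈ m ^ 2 := by
    simp only [mul_zero, mul_one, z0, z2]
    have : b - (α * α + b) = - (α * α) := by ring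
    rw [this]
    exact neg_mem (mul_mem_pow1 hα (j := 1) (by simpa using hα) (by omega))
  -- vanishing of leading forms
  have hvan : ∀ j ≤ G, γ ^ (2 * j + 1) * z (2 * (G - j)) ∈ m ^ (G + j + 2) := by
    intro j
    induction j using Nat.strong_induction_on with
    | _ j ih =>
    intro hj
    rcases j with _ | j
    · simp [hγP]
    obtain ⟨i, hi⟩ : ∃ i, G = i + (j + 1) := ⟨G - (j + 1), by omega⟩
    have e1 : G - (j + 1) = i := by omega
    have h0 := ih j (by omega) (by omega)
    rw [show G - j = i + 1 by omega] at h0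
    have h1 : γ ^ (2 * j + 1) * z (2 * (i + 2)) ∈ m ^ (G + j + 2 + 1) := by
      rcases j with _ | j
      · rw [show i + 2 = G + 1 by omega, hG2]; simp
      · have h2 := ih j (by omega) (by omega)
        rw [show G - j = i + 2 by omega] at h2
        rw [show γ ^ (2 * (j + 1) + 1) = γ ^ 2 * γ ^ (2 * j + 1) by ring, mul_assoc]
        exact mul_mem_pow (hγp 2) h2 (by omega)
    rw [e1]
    have hunit : IsUnit ((2 * (i : B) + 3) * (2 * (i : B) + 1)) := by
      exact_mod_cast hn ((2 * i + 3) * (2 * i + 1)) (by positivity)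
    rw [← Ideal.unit_mul_mem_iff_mem _ hunit]
    have h3 := hmain i (by omega)
    have : (2 * (i : B) + 3) * (2 * (i : B) + 1) * (γ ^ (2 * (j + 1) + 1) * z (2 * i)) =
      4 * (2 * (i : B) + 3) ^ 2 * (b * (γ ^ (2 * j + 1) * z (2 * (i + 1))))
      - 4 * (γ ^ (2 * j + 1) * z (2 * (i + 2)))
      - γ ^ (2 * j + 1) * (4 * (2 * (i : B) + 3) ^ 2 * (b * z (2 * (i + 1))) - 4 * z (2 * (i + 2))
        - (2 * (i : B) + 3) * (2 * (i : B) + 1) * (γ ^ 2 * z (2 * i))) := by ring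
    rw [this]
    refine Ideal.sub_mem _ (Ideal.sub_mem _ (Ideal.mul_mem_left _ _ ?_)
      (Ideal.mul_mem_left _ _ ?_)) ?_
    · exact mul_mem_pow1 hb h0 (by omega)
    · exact pow_le_mem h1 (by omega)
    · exact mul_mem_pow (hγp _) h3 (by omega)
  have hvan' : ∀ i s, i ≤ G → 2 * G ≤ s + i → 2 * G + 1 ≤ s + 2 * i →
      γ ^ s * z (2 * i) ∈ m ^ (s + i + 1) := by
    intro i s hi hs hs2
    have h := hvan (G - i) (by omega)
    rw [show G - (G - i) = i by omega] at h
    obtain ⟨t, rfl⟩ : ∃ t, s = t + (2 * (G - i) + 1) := ⟨s - (2 * (G - i) + 1), by omega⟩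
    rw [pow_add γ t, mul_assoc]
    exact mul_mem_pow (hγp t) h (by omega)
  -- spanning
  have hspan : ∀ k, m ^ k ≤ Ideal.span {y | ∃ i s, i ≤ G ∧ s + i = k ∧ y = γ ^ s * z (2 * i)}
      ⊔ m ^ (k + 1) := by
    intro k
    induction k with
    | zero =>
      intro x _
      refine Ideal.mem_sup_left ?_
      have : (1 : B) ∈ Ideal.span {y | ∃ i s, i ≤ G ∧ s + i = 0 ∧ y = γ ^ s * z (2 * i)} :=
        Ideal.subset_span ⟨0, 0, by omega, rfl, by simp [z0]⟩
      rw [(Ideal.eq_top_iff_one _).2 this]; trivial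
    | succ k ih =>
      set I := Ideal.span {y | ∃ i s, i ≤ G ∧ s + i = k + 1 ∧ y = γ ^ s * z (2 * i)} with hI
      have h1 : m ^ (k + 1) ≤ Ideal.span {y | ∃ i s, i ≤ G ∧ s + i = k ∧ y = γ ^ s * z (2 * i)} * m
          ⊔ m ^ (k + 1 + 1) := by
        rw [pow_succ m k, pow_succ m (k + 1), ← Ideal.sup_mul]
        exact Ideal.mul_mono_left ih
      refine h1.trans (sup_le ?_ le_sup_right)
      conv_lhs => rw [hm]
      rw [Ideal.span_mul_span', Ideal.span_le]
      rintro _ ⟨y, ⟨i, s, hi, rfl, rfl⟩, t, ht, rfl⟩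
      have hgam : γ * (γ ^ s * z (2 * i)) ∈ I :=
        Ideal.subset_span ⟨i, s + 1, hi, by omega, by ring⟩
      have hmem : γ ^ s * z (2 * i) ∈ m ^ (s + i) := mul_mem_pow (hγp s) (hP i hi) le_rfl
      simp only [Set.mem_insert_iff, Set.mem_singleton_iff] at ht
      show γ ^ s * z (2 * i) * t ∈ I ⊔ m ^ (s + i + 1 + 1)
      rcases ht with rfl | rfl | rfl
      · have hl := hlead 0 (by omega)
        simp only [z0, z1, mul_zero, zero_add, Nat.cast_zero, mul_one, one_mul] at hl
        have h16 : IsUnit (16 : B) := by exact_mod_cast hn 16 (by omega)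
        rw [← Ideal.unit_mul_mem_iff_mem _ h16]
        have : 16 * (γ ^ s * z (2 * i) * t) = - (γ * (γ ^ s * z (2 * i)))
          + (8 * 2 * t + γ) * (γ ^ s * z (2 * i)) := by ring
        rw [this]
        exact Ideal.add_mem _ (Ideal.mem_sup_left (neg_mem hgam))
          (Ideal.mem_sup_right (mul_mem_pow hl hmem (by omega)))
      · rcases i with _ | i
        · have : γ ^ s * z (2 * 0) * t = γ ^ s * z (2 * 1) +
            γ ^ s * (t * z (2 * 0) - z (2 * 1)) := by ring
          rw [this]
          exact Ideal.add_mem _ (Ideal.mem_sup_left (Ideal.subset_span ⟨1, s, hG0, rfl, rfl⟩))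
            (Ideal.mem_sup_right (mul_mem_pow (hγp s) hmain0 (by omega)))
        · have hunit : IsUnit (4 * (2 * (i : B) + 3) ^ 2) := by
            exact_mod_cast hn (4 * (2 * i + 3) ^ 2) (by positivity)
          rw [← Ideal.unit_mul_mem_iff_mem _ hunit]
          have : 4 * (2 * (i : B) + 3) ^ 2 * (γ ^ s * z (2 * (i + 1)) * t) =
            4 * (γ ^ s * z (2 * (i + 2)))
            + (2 * (i : B) + 3) * (2 * (i : B) + 1) * (γ ^ (s + 2) * z (2 * i))
            + γ ^ s * (4 * (2 * (i : B) + 3) ^ 2 * (t * z (2 * (i + 1))) - 4 * z (2 * (i + 2))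
        - (2 * (i : B) + 3) * (2 * (i : B) + 1) * (γ ^ 2 * z (2 * i))) := by ring
          rw [this]
          refine Ideal.add_mem _ (Ideal.mem_sup_left (Ideal.add_mem _ (Ideal.mul_mem_left _ _ ?_)
            (Ideal.mul_mem_left _ _ ?_))) (Ideal.mem_sup_right
              (mul_mem_pow (hγp s) (hmain i hi) (by omega)))
          · by_cases h : i + 2 ≤ G
            · exact Ideal.subset_span ⟨i + 2, s, h, by omega, rfl⟩
            · rw [show i + 2 = G + 1 by omega, hG2]; simp
          · exact Ideal.subset_span ⟨i, s + 2, by omega, by omega, rfl⟩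
      · rw [mul_comm]; exact Ideal.mem_sup_left hgam
  have htop : m ^ (2 * G + 1) = ⊥ := by
    refine Submodule.eq_bot_of_le_smul_of_le_jacobson_bot m _
      ((isNoetherianRing_iff_ideal_fg B).1 inferInstance _) ?_ hjac
    rw [smul_eq_mul, ← pow_succ']
    refine (hspan _).trans (sup_le ?_ le_rfl)
    rw [Ideal.span_le]
    rintro _ ⟨i, s, hi, hs, rfl⟩
    exact pow_le_mem (hvan' i s hi (by omega) (by omega)) (by omega)
  have hzero : ∀ y k, 2 * G + 1 ≤ k → y ∈ m ^ k → y = 0 := by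
    intro y k hk hy
    have := pow_le_mem hy hk
    rw [htop] at this; simpa using this
  have hT : ∀ r s i, i ≤ G + 1 → r + s + i = 2 * G → ∃ N c : ℕ, N ≠ 0 ∧
      (N : B) * (b ^ r * γ ^ s * z (2 * i)) = c * γ ^ (2 * G) ∧
      (i = 0 → Even r → c ≠ 0) ∧ (i = 1 → Odd r → c ≠ 0) := by
    intro r
    induction r with
    | zero =>
      intro s i hi hs
      rcases i with _ | i
      · refine ⟨1, 1, one_ne_zero, ?_, by simp, by simp⟩
        rw [show s = 2 * G by omega]; simp [z0]
      · refine ⟨1, 0, one_ne_zero, ?_, by simp, by simp⟩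
        by_cases h : i + 1 ≤ G
        · rw [pow_zero, one_mul, hzero _ _ (by omega) (hvan' (i + 1) s h (by omega) (by omega))]
          simp
        · rw [show i + 1 = G + 1 by omega, hG2]; simp
    | succ r ih =>
      intro s i hi hs
      rcases i with _ | i
      · obtain ⟨N, c, hN, h1, h2, h3⟩ := ih s 1 (by omega) (by omega)
        refine ⟨N, c, hN, ?_, ?_, by simp⟩
        · rw [← h1]
          have e : b ^ r * γ ^ s * (b * z (2 * 0) - z (2 * 1)) = 0 :=
            hzero _ (r + s + 2) (by omega)
              (mul_mem_pow (mul_mem_pow (Ideal.pow_mem_pow hb r) (hγp s) le_rfl) hmain0 le_rfl)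
          linear_combination (N : B) * e
        · intro _ he
          exact h3 rfl (by simpa [Nat.even_add_one] using he)
      · by_cases h : i + 1 ≤ G
        · obtain ⟨N, c, hN, h1, h2, h3⟩ := ih s (i + 2) (by omega) (by omega)
          obtain ⟨N', c', hN', h1', h2', h3'⟩ := ih (s + 2) i (by omega) (by omega)
          have e : b ^ r * γ ^ s * (4 * (2 * (i : B) + 3) ^ 2 * (b * z (2 * (i + 1)))
              - 4 * z (2 * (i + 2))
              - (2 * (i : B) + 3) * (2 * (i : B) + 1) * (γ ^ 2 * z (2 * i))) = 0 :=
            hzero _ (r + s + (i + 3)) (by omega)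
              (mul_mem_pow (mul_mem_pow (Ideal.pow_mem_pow hb r) (hγp s) le_rfl)
                (hmain i h) le_rfl)
          refine ⟨N * N' * (4 * (2 * i + 3) ^ 2),
            4 * N' * c + N * (2 * i + 3) * (2 * i + 1) * c', by positivity, ?_, by simp, ?_⟩
          · push_cast
            linear_combination (N : B) * N' * e + 4 * (N' : B) * h1
              + N * (2 * (i : B) + 3) * (2 * (i : B) + 1) * h1'
          · intro hi1 ho
            have hi0 : i = 0 := by omega
            have := h2' hi0 (by simpa [Nat.odd_add_one] using ho)
            positivity
        · refine ⟨1, 0, one_ne_zero, ?_, by simp, fun hi => by omega⟩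
          rw [show i + 1 = G + 1 by omega, hG2]; simp
  obtain ⟨N, c, hN, h1, h2, _⟩ := hT (2 * G) 0 0 (by omega) (by omega)
  rw [hb0] at h1
  have hc := h2 rfl (by simp)
  have := (hn c hc).mul_right_eq_zero.1 (by rw [← h1]; simp)
  exact this

/-! ### Basic facts on the ideals `J g` -/

theorem zeta_rec (n : ℕ) : zeta (n + 3) = X 0 * zeta (n + 2)
        + ((n : MvPolynomial (Fin 3) ℂ) + 2) ^ 2 * (X 1 + (-1) ^ n * 8) * zeta (n + 1)
        + 2 * ((n : MvPolynomial (Fin 3) ℂ) + 2) * ((n : MvPolynomial (Fin 3) ℂ) + 1)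
          * X 2 * zeta n := by
  rw [zeta]
  have e8 : (C 8 : MvPolynomial (Fin 3) ℂ) = 8 := map_ofNat C 8
  have e2 : (C 2 : MvPolynomial (Fin 3) ℂ) = 2 := map_ofNat C 2
  have en : (C (n : ℂ) : MvPolynomial (Fin 3) ℂ) = n := map_natCast C n
  simp only [map_mul, map_pow, map_add, map_neg, map_one, e8, e2, en, pow_add]
  ring

theorem zeta_zero : zeta 0 = 1 := by rw [zeta]
theorem zeta_one : zeta 1 = X 0 := by rw [zeta]
theorem zeta_two : zeta 2 = X 0 * X 0 + (X 1 - 8) := by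
  have e8 : (C 8 : MvPolynomial (Fin 3) ℂ) = 8 := map_ofNat C 8
  rw [zeta, zeta_zero, zeta_one, e8, mul_one]

theorem natUnit (n : ℕ) (h : n ≠ 0) : IsUnit (n : MvPolynomial (Fin 3) ℂ) := by
  have : IsUnit (C (n : ℂ) : MvPolynomial (Fin 3) ℂ) :=
    IsUnit.map C (isUnit_iff_ne_zero.2 (by exact_mod_cast h))
  simpa using this

theorem J_le {g : ℕ} {I : Ideal (MvPolynomial (Fin 3) ℂ)} (h0 : zeta g ∈ I)
    (h1 : zeta (g + 1) ∈ I) (h2 : zeta (g + 2) ∈ I) : J g ≤ I := by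
  rw [J, Ideal.span_le]
  rintro _ (rfl | rfl | rfl) <;> assumption

theorem zJ0 (g : ℕ) : zeta g ∈ J g := Ideal.subset_span (by simp)
theorem zJ1 (g : ℕ) : zeta (g + 1) ∈ J g := Ideal.subset_span (by simp)
theorem zJ2 (g : ℕ) : zeta (g + 2) ∈ J g := Ideal.subset_span (by simp)

theorem zJ3 (g : ℕ) : zeta (g + 3) ∈ J g := by
  rw [zeta_rec]
  exact Ideal.add_mem _ (Ideal.add_mem _ (Ideal.mul_mem_left _ _ (zJ2 g))
    (Ideal.mul_mem_left _ _ (zJ1 g))) (Ideal.mul_mem_left _ _ (zJ0 g))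

theorem J_succ_le (g : ℕ) : J (g + 1) ≤ J g := J_le (zJ1 g) (zJ2 g) (zJ3 g)

theorem J_anti {g h : ℕ} (hgh : g ≤ h) : J h ≤ J g := by
  induction hgh with
  | refl => exact le_rfl
  | step _ ih => exact (J_succ_le _).trans ih

theorem gamma_J {g : ℕ} {f : MvPolynomial (Fin 3) ℂ} (hf : f ∈ J g) : X 2 * f ∈ J (g + 1) := by
  have : J g ≤ Submodule.comap (LinearMap.mulLeft (MvPolynomial (Fin 3) ℂ) (X 2)) (J (g + 1)) := by
    refine J_le ?_ ?_ ?_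
    · show X 2 * zeta g ∈ J (g + 1)
      have hu : IsUnit (2 * ((g : MvPolynomial (Fin 3) ℂ) + 2) * ((g : MvPolynomial (Fin 3) ℂ) + 1)) := by
        exact_mod_cast natUnit (2 * (g + 2) * (g + 1)) (by positivity)
      rw [← Ideal.unit_mul_mem_iff_mem _ hu]
      have e : 2 * ((g : MvPolynomial (Fin 3) ℂ) + 2) * ((g : MvPolynomial (Fin 3) ℂ) + 1) * (X 2 * zeta g)
        = zeta (g + 3) - X 0 * zeta (g + 2)
        - ((g : MvPolynomial (Fin 3) ℂ) + 2) ^ 2 * (X 1 + (-1) ^ g * 8) * zeta (g + 1) := by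
        rw [zeta_rec]; ring
      rw [e]
      exact Ideal.sub_mem _ (Ideal.sub_mem _ (zJ2 (g + 1)) (Ideal.mul_mem_left _ _ (zJ1 (g + 1))))
        (Ideal.mul_mem_left _ _ (zJ0 (g + 1)))
    · exact Ideal.mul_mem_left _ _ (zJ0 (g + 1))
    · exact Ideal.mul_mem_left _ _ (zJ1 (g + 1))
  exact this hf

theorem gamma_pow_J {g : ℕ} {f : MvPolynomial (Fin 3) ℂ} (hf : f ∈ J g) (b : ℕ) :
    X 2 ^ b * f ∈ J (g + b) := by
  induction b with
  | zero => simpa using hf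
  | succ b ih => rw [pow_succ', mul_assoc]; exact gamma_J ih

/-! ### Upper bound -/

theorem q_J {n : ℕ} {f : MvPolynomial (Fin 3) ℂ} (hf : f ∈ J (n + 1)) :
    ∃ f1 ∈ J (n + 2), ∃ f2 ∈ J n, (X 1 + (-1) ^ n * 8) * f = f1 + X 2 * f2 := by
  obtain ⟨a, r, hr, rfl⟩ := Ideal.mem_span_insert.1 hf
  have hr' : r ∈ J (n + 2) := by
    refine Ideal.span_le.2 ?_ hr
    rintro _ (rfl | rfl)
    · exact zJ0 _
    · exact zJ1 _
  obtain ⟨u, hu⟩ : IsUnit (((n : MvPolynomial (Fin 3) ℂ) + 2) ^ 2) := by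
    exact_mod_cast natUnit ((n + 2) ^ 2) (by positivity)
  have hinv : (↑u⁻¹ : MvPolynomial (Fin 3) ℂ) * ((n : MvPolynomial (Fin 3) ℂ) + 2) ^ 2 = 1 := by
    rw [← hu]; simp
  refine ⟨(X 1 + (-1) ^ n * 8) * r + a * (↑u⁻¹ : MvPolynomial (Fin 3) ℂ) * (zeta (n + 3) - X 0 * zeta (n + 2)), ?_,
    - (a * (↑u⁻¹ : MvPolynomial (Fin 3) ℂ) * (2 * ((n : MvPolynomial (Fin 3) ℂ) + 2) * ((n : MvPolynomial (Fin 3) ℂ) + 1)) * zeta n),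
    ?_, ?_⟩
  · exact Ideal.add_mem _ (Ideal.mul_mem_left _ _ hr') (Ideal.mul_mem_left _ _
      (Ideal.sub_mem _ (zJ1 (n + 2)) (Ideal.mul_mem_left _ _ (zJ0 (n + 2)))))
  · exact neg_mem (Ideal.mul_mem_left _ _ (zJ0 n))
  · rw [zeta_rec]
    linear_combination - (a * (X 1 + (-1) ^ n * 8) * zeta (n + 1)) * hinv

theorem q_J0 (f : MvPolynomial (Fin 3) ℂ) : (X 1 - 8) * f ∈ J 1 := by
  have : X 1 - 8 = zeta 2 - X 0 * zeta 1 := by rw [zeta_two, zeta_one]; ring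
  rw [this]
  exact Ideal.mul_mem_right _ _ (Ideal.sub_mem _ (zJ1 1) (Ideal.mul_mem_left _ _ (zJ0 1)))

theorem mem_J0 (f : MvPolynomial (Fin 3) ℂ) : f ∈ J 0 := by
  have : (1 : MvPolynomial (Fin 3) ℂ) ∈ J 0 := by rw [← zeta_zero]; exact zJ0 0
  rw [(Ideal.eq_top_iff_one _).2 this]; trivial

theorem x_J (m : ℕ) {f : MvPolynomial (Fin 3) ℂ} (hf : f ∈ J (2 * m)) :
    ∃ f1 ∈ J (2 * (m + 1)), ∃ f2 ∈ J (2 * m), ∃ f3 ∈ J (2 * (m - 1)), (m = 0 → f3 = 0) ∧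
      (X 1 ^ 2 - 64) * f = f1 + X 2 * f2 + X 2 ^ 2 * f3 := by
  have e0 : ∀ k : ℕ, (-1 : MvPolynomial (Fin 3) ℂ) ^ (2 * k) = 1 := fun k => by
    rw [pow_mul]; simp
  have e1 : ∀ k : ℕ, (-1 : MvPolynomial (Fin 3) ℂ) ^ (2 * k + 1) = -1 := fun k => by
    rw [pow_succ, e0]; simp
  rcases m with _ | m
  · obtain ⟨f1, h1, f2, h2, h⟩ := q_J (n := 0) (q_J0 f)
    refine ⟨f1, h1, f2, h2, 0, zero_mem _, fun _ => rfl, ?_⟩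
    simp only [pow_zero] at h
    linear_combination h
  · obtain ⟨f1, h1, f2, h2, h⟩ := q_J (n := 2 * m + 1) hf
    obtain ⟨g1, k1, g2, k2, k⟩ := q_J (n := 2 * m + 2) h1
    obtain ⟨g3, k3, g4, k4, k'⟩ := q_J (n := 2 * m) h2
    rw [e1] at h
    rw [show 2 * m + 2 = 2 * (m + 1) by ring, e0] at k
    rw [e0] at k'
    refine ⟨g1, k1, g2 + g3, add_mem k2 k3, g4, k4, by simp, ?_⟩
    linear_combination (X 1 + 8) * h + k + X 2 * k'

theorem upper_aux (G : ℕ) (k : ℕ) : ∀ m b f, m ≤ G → 2 * G ≤ b + k + m + 1 → f ∈ J (2 * m) →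
    (X 1 ^ 2 - 64) ^ k * (X 2 ^ b * f) ∈ J (2 * G) ⊔ Ideal.span {X 2 ^ (2 * G - 1)} := by
  induction k with
  | zero =>
    intro m b f hm h hf
    rw [pow_zero, one_mul]
    rcases m with _ | m
    · refine Ideal.mem_sup_right (Ideal.mem_span_singleton.2 ?_)
      exact Dvd.dvd.mul_right (pow_dvd_pow _ (by omega)) _
    · exact Ideal.mem_sup_left (J_anti (by omega) (gamma_pow_J hf b))
  | succ k ih =>
    intro m b f hm h hf
    rcases hm.eq_or_lt with rfl | hm
    · exact Ideal.mem_sup_left (Ideal.mul_mem_left _ _ (Ideal.mul_mem_left _ _ hf))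
    obtain ⟨f1, h1, f2, h2, f3, h3, h0, e⟩ := x_J m hf
    have e' : (X 1 ^ 2 - 64) ^ (k + 1) * (X 2 ^ b * f) =
      (X 1 ^ 2 - 64) ^ k * (X 2 ^ b * f1) + (X 1 ^ 2 - 64) ^ k * (X 2 ^ (b + 1) * f2)
      + (X 1 ^ 2 - 64) ^ k * (X 2 ^ (b + 2) * f3) := by
      linear_combination (X 1 ^ 2 - 64) ^ k * X 2 ^ b * e
    rw [e']
    refine Ideal.add_mem _ (Ideal.add_mem _ (ih _ _ _ (by omega) (by omega) h1)
      (ih _ _ _ (by omega) (by omega) h2)) ?_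
    rcases Nat.eq_zero_or_pos m with h00 | h00
    · rw [h0 h00]; simp
    · exact ih _ _ _ (by omega) (by omega) h3

/-- evaluation at the point (0,8,0) -/
noncomputable def ev : MvPolynomial (Fin 3) ℂ →ₐ[ℂ] ℂ := aeval ![0, 8, 0]

theorem X2_mem_J1 : X 2 ∈ J 1 := by
  have h : (2 * 2 * X 2 : MvPolynomial (Fin 3) ℂ) ∈ J 1 := by
    have e := zeta_rec 0
    have : (2 * 2 * X 2 : MvPolynomial (Fin 3) ℂ) = zeta 3 - X 0 * zeta 2 -
      4 * (X 1 + 8) * zeta 1 := by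
      simp only [zero_add] at e
      rw [e, zeta_zero]; push_cast; ring
    rw [this]
    exact Ideal.sub_mem _ (Ideal.sub_mem _ (zJ2 1) (Ideal.mul_mem_left _ _ (zJ1 1)))
      (Ideal.mul_mem_left _ _ (zJ0 1))
  have hu : IsUnit (2 * 2 : MvPolynomial (Fin 3) ℂ) := by exact_mod_cast natUnit (2 * 2) (by norm_num)
  exact (Ideal.unit_mul_mem_iff_mem _ hu).1 h

theorem sub_ev_mem_span (f : MvPolynomial (Fin 3) ℂ) :
    f - C (ev f) ∈ Ideal.span {X 0, X 1 - 8, X 2} := by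
  set I : Ideal (MvPolynomial (Fin 3) ℂ) := Ideal.span {X 0, X 1 - 8, X 2} with hI
  induction f using MvPolynomial.induction_on with
  | C a => simp [ev]
  | add p q hp hq =>
    have := I.add_mem hp hq
    rw [map_add, map_add]
    convert this using 1; ring
  | mul_X p i hp =>
    have hX : X i - C (ev (X i)) ∈ I := by
      fin_cases i
      · simp only [ev, aeval_X]; simp; exact Ideal.subset_span (by simp)
      · have e8 : (C 8 : MvPolynomial (Fin 3) ℂ) = 8 := map_ofNat C 8
        simp only [ev, aeval_X]; simp [e8]; exact Ideal.subset_span (by simp)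
      · simp only [ev, aeval_X]; simp; exact Ideal.subset_span (by simp)
    rw [map_mul, map_mul]
    have : p * X i - C (ev p) * C (ev (X i)) = X i * (p - C (ev p)) + C (ev p) * (X i - C (ev (X i))) := by
      ring
    rw [this]
    exact I.add_mem (I.mul_mem_left _ hp) (I.mul_mem_left _ hX)

theorem span_le_J1 : Ideal.span {X 0, X 1 - 8, X 2} ≤ J 1 := by
  rw [Ideal.span_le]
  rintro _ (rfl | rfl | rfl)
  · rw [← zeta_one]; exact zJ0 1
  · simpa using q_J0 1
  · exact X2_mem_J1

theorem J1_le_ker : J 1 ≤ RingHom.ker ev := by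
  refine J_le ?_ ?_ ?_
  · rw [zeta_one]; simp [RingHom.mem_ker, ev]
  · rw [zeta_two]; simp [RingHom.mem_ker, ev]
  · have e := zeta_rec 0
    simp only [zero_add] at e
    show zeta 3 ∈ _
    rw [e, zeta_two, zeta_one]; simp [RingHom.mem_ker, ev]

/-- the parity involution -/
noncomputable def par : MvPolynomial (Fin 3) ℂ →ₐ[ℂ] MvPolynomial (Fin 3) ℂ :=
  aeval ![- X 0, X 1, - X 2]

theorem par_zeta (n : ℕ) : par (zeta n) = (-1) ^ n * zeta n := by
  induction n using Nat.strong_induction_on with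
  | _ n ih =>
  have p0 : par (X 0) = - X 0 := by simp [par]
  have p1 : par (X 1) = X 1 := by simp [par]
  have p2 : par (X 2) = - X 2 := by simp [par]
  match n, ih with
  | 0, _ => simp [zeta_zero]
  | 1, _ => simp [zeta_one, p0]
  | 2, _ => rw [zeta_two]; simp only [map_add, map_mul, map_sub, map_ofNat, p0, p1]; ring
  | n + 3, ih =>
    rw [zeta_rec]
    simp only [map_add, map_mul, map_pow, map_neg, map_one, map_natCast, map_ofNat, p0, p1, p2,
      ih n (by omega), ih (n + 1) (by omega), ih (n + 2) (by omega)]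
    ring

theorem par_J {g : ℕ} {f : MvPolynomial (Fin 3) ℂ} (hf : f ∈ J g) : par f ∈ J g := by
  have : J g ≤ (J g).comap par := by
    refine J_le ?_ ?_ ?_ <;> rw [Ideal.mem_comap, par_zeta] <;> apply Ideal.mul_mem_left
    · exact zJ0 g
    · exact zJ1 g
    · exact zJ2 g
  exact this hf

theorem upper (G : ℕ) (hG : 1 ≤ G) : (X 1 ^ 2 - 64) ^ (2 * G - 1) ∈ J (2 * G) := by
  have h := upper_aux G (2 * G - 1) 0 0 1 (by omega) (by omega) (mem_J0 1)
  rw [pow_zero, mul_one, mul_one] at h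
  obtain ⟨j, hj, y, hy, e⟩ := Submodule.mem_sup.1 h
  obtain ⟨f, rfl⟩ := Ideal.mem_span_singleton.1 hy
  have h1 : X 2 ^ (2 * G - 1) * (f - C (ev f)) ∈ J (2 * G) := by
    have := gamma_pow_J (span_le_J1 (sub_ev_mem_span f)) (2 * G - 1)
    rwa [show 1 + (2 * G - 1) = 2 * G by omega] at this
  have h2 : (X 1 ^ 2 - 64) ^ (2 * G - 1) - X 2 ^ (2 * G - 1) * C (ev f) ∈ J (2 * G) := by
    have := Ideal.add_mem _ hj h1
    convert this using 1
    rw [← e]; ring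
  have h3 := par_J h2
  have p1 : par (X 1) = X 1 := by simp [par]
  have p2 : par (X 2) = - X 2 := by simp [par]
  have pC : par (C (ev f)) = C (ev f) := by simp [par]
  have ho : Odd (2 * G - 1) := ⟨G - 1, by omega⟩
  rw [map_sub, map_mul, map_pow, map_sub, map_pow, map_pow, p1, p2, pC, ho.neg_pow, map_ofNat] at h3
  have h4 := Ideal.add_mem _ h2 h3
  have hu : IsUnit (2 : MvPolynomial (Fin 3) ℂ) := by exact_mod_cast natUnit 2 (by norm_num)
  rw [← Ideal.unit_mul_mem_iff_mem _ hu]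
  convert h4 using 1
  ring

/-! ### Injectivity of multiplication by γ -/

/-- substitute the constant `c` for the variable `i` -/
noncomputable def sb (i : Fin 3) (c : ℂ) : MvPolynomial (Fin 3) ℂ →ₐ[ℂ] MvPolynomial (Fin 3) ℂ :=
  aeval (Function.update X i (C c))

theorem sub_sb (i : Fin 3) (c : ℂ) (f : MvPolynomial (Fin 3) ℂ) :
    X i - C c ∣ f - sb i c f := by
  induction f using MvPolynomial.induction_on with
  | C a => simp [sb]
  | add p q hp hq =>
    have := dvd_add hp hq
    rw [map_add]; convert this using 1; ring
  | mul_X p j hp =>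
    have hX : X i - C c ∣ X j - sb i c (X j) := by
      simp only [sb, aeval_X]
      by_cases h : j = i
      · subst h; simp
      · simp [Function.update_of_ne h]
    rw [map_mul]
    have : p * X j - sb i c p * sb i c (X j) = X j * (p - sb i c p) + sb i c p * (X j - sb i c (X j)) := by
      ring
    rw [this]
    exact dvd_add (hp.mul_left _) (hX.mul_left _)

theorem dvd_of_sb {i : Fin 3} {c : ℂ} {f : MvPolynomial (Fin 3) ℂ} (h : sb i c f = 0) :
    X i - C c ∣ f := by
  simpa [h] using sub_sb i c f

/-- ζ with γ = 0 -/
noncomputable def zz (n : ℕ) : MvPolynomial (Fin 3) ℂ := sb 2 0 (zeta n)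

theorem zz_rec (n : ℕ) : zz (n + 2) = X 0 * zz (n + 1)
    + ((n : MvPolynomial (Fin 3) ℂ) + 1) ^ 2 * (X 1 - (-1) ^ n * 8) * zz n := by
  have p0 : sb 2 0 (X 0) = X 0 := by simp [sb]
  have p1 : sb 2 0 (X 1) = X 1 := by simp [sb]
  have p2 : sb 2 0 (X 2) = 0 := by simp [sb]
  rcases n with _ | n
  · simp only [zz, zero_add, zeta_two, zeta_one, zeta_zero]
    simp only [map_add, map_mul, map_sub, map_ofNat, map_one, p0, p1]; simp
  · simp only [zz]
    rw [show n + 1 + 2 = n + 3 by ring, zeta_rec]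
    simp only [map_add, map_mul, map_pow, map_neg, map_one, map_natCast, map_ofNat, p0, p1, p2]
    push_cast
    ring

/-- ζ with γ = 0, β = c, as a polynomial in α -/
noncomputable def toPoly (c : ℂ) : MvPolynomial (Fin 3) ℂ →ₐ[ℂ] Polynomial ℂ :=
  aeval ![Polynomial.X, Polynomial.C c, 0]

theorem toPoly_zz (c : ℂ) (n : ℕ) : (toPoly c (zz n)).Monic ∧ (toPoly c (zz n)).natDegree = n ∧
    (toPoly c (zz (n + 1))).Monic ∧ (toPoly c (zz (n + 1))).natDegree = n + 1 := by
  induction n with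
  | zero =>
    have p0 : sb 2 0 (X 0) = X 0 := by simp [sb]
    simp [zz, zeta_zero, zeta_one, p0, toPoly, Polynomial.monic_X]
  | succ n ih =>
    obtain ⟨m0, d0, m1, d1⟩ := ih
    refine ⟨m1, d1, ?_⟩
    have e : toPoly c (zz (n + 2)) = Polynomial.X * toPoly c (zz (n + 1)) +
        Polynomial.C (((n : ℂ) + 1) ^ 2 * (c - (-1) ^ n * 8)) * toPoly c (zz n) := by
      rw [zz_rec]
      have q0 : toPoly c (X 0) = Polynomial.X := by simp [toPoly]
      have q1 : toPoly c (X 1) = Polynomial.C c := by simp [toPoly]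
      simp only [map_add, map_mul, map_sub, map_pow, map_neg, map_one, map_natCast, map_ofNat, q0, q1]
    have hm : (Polynomial.X * toPoly c (zz (n + 1))).Monic := Polynomial.monic_X.mul m1
    have hd : (Polynomial.X * toPoly c (zz (n + 1))).natDegree = n + 2 := by
      rw [Polynomial.natDegree_X_mul m1.ne_zero, d1]
    have hlt : (Polynomial.C (((n : ℂ) + 1) ^ 2 * (c - (-1) ^ n * 8)) * toPoly c (zz n)).degree
        < (Polynomial.X * toPoly c (zz (n + 1))).degree := by
      rw [Polynomial.degree_eq_natDegree hm.ne_zero, hd]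
      refine lt_of_le_of_lt Polynomial.degree_le_natDegree ?_
      have := Polynomial.natDegree_C_mul_le (((n : ℂ) + 1) ^ 2 * (c - (-1) ^ n * 8)) (toPoly c (zz n))
      rw [Nat.cast_lt]; omega
    rw [show n + 1 + 1 = n + 2 by ring, e]
    exact ⟨hm.add_of_left hlt, by rw [Polynomial.natDegree_add_eq_left_of_degree_lt hlt, hd]⟩

theorem zz_ne (n : ℕ) : zz n ≠ 0 := by
  intro h
  have := (toPoly_zz 0 n).1.ne_zero
  rw [h] at this; simp at this

theorem sb_zz_ne (c : ℂ) (n : ℕ) : sb 1 c (zz n) ≠ 0 := by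
  intro h
  have h1 := (toPoly_zz c n).1.ne_zero
  have h2 : ∀ f, toPoly c (sb 1 c f) = toPoly c f := by
    intro f
    have : (toPoly c).comp (sb 1 c) = toPoly c := by
      refine MvPolynomial.algHom_ext fun i => ?_
      fin_cases i <;> simp [toPoly, sb]
    exact DFunLike.congr_fun this f
  rw [← h2, h] at h1
  simp at h1

theorem zz_syz (k : ℕ) : ∀ A B : MvPolynomial (Fin 3) ℂ, A * zz k + B * zz (k + 1) = 0 → zz k ∣ B := by
  induction k with
  | zero => intro A B _; simp [zz, zeta_zero]
  | succ k ih =>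
    intro A B h
    rw [zz_rec] at h
    set c : MvPolynomial (Fin 3) ℂ := ((k : MvPolynomial (Fin 3) ℂ) + 1) ^ 2 with hc
    set q : MvPolynomial (Fin 3) ℂ := X 1 - (-1) ^ k * 8 with hq
    obtain ⟨t, ht⟩ := ih (c * q * B) (A + X 0 * B) (by linear_combination h)
    have h1 : t * zz (k + 1) = - (c * q * B) := by
      apply mul_left_cancel₀ (zz_ne k)
      linear_combination h - zz (k + 1) * ht
    have hqC : q = X 1 - C ((-1) ^ k * 8) := by
      rw [hq, map_mul, map_pow, map_neg, map_one, map_ofNat]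
    have hsq : sb 1 ((-1) ^ k * 8) q = 0 := by
      rw [hqC]; simp [sb]
    have h2 : sb 1 ((-1) ^ k * 8) t = 0 := by
      have := congrArg (sb 1 ((-1) ^ k * 8)) h1
      rw [map_mul, map_neg, map_mul, map_mul, hsq, mul_zero, zero_mul, neg_zero] at this
      exact (mul_eq_zero.1 this).resolve_right (sb_zz_ne _ _)
    have h3 := dvd_of_sb h2
    rw [← hqC] at h3
    obtain ⟨t', rfl⟩ := h3
    have hq0 : q ≠ 0 := by
      intro h0
      have := congrArg (aeval (fun _ => (-1) ^ k * 8 + 1 : Fin 3 → ℂ)) h0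
      rw [hqC] at this
      simp at this
    have h4 : c * B = zz (k + 1) * (- t') := by
      apply mul_left_cancel₀ hq0
      linear_combination h1
    have hcu : IsUnit c := by
      rw [hc]; exact_mod_cast natUnit ((k + 1) ^ 2) (by positivity)
    exact (hcu.dvd_mul_left).1 ⟨_, h4⟩

theorem gamma_inj {g : ℕ} {f : MvPolynomial (Fin 3) ℂ} (h : X 2 * f ∈ J (g + 1)) : f ∈ J g := by
  obtain ⟨a, r, hr, e1⟩ := Ideal.mem_span_insert.1 h
  obtain ⟨b, c, e2⟩ := Ideal.mem_span_pair.1 hr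
  rw [show g + 1 + 2 = g + 3 by ring, zeta_rec, show g + 1 + 1 = g + 2 by ring] at e2
  set k : MvPolynomial (Fin 3) ℂ :=
    2 * ((g : MvPolynomial (Fin 3) ℂ) + 2) * ((g : MvPolynomial (Fin 3) ℂ) + 1) with hk
  set A := a + c * (((g : MvPolynomial (Fin 3) ℂ) + 2) ^ 2 * (X 1 + (-1) ^ g * 8)) with hA
  set B := b + c * X 0 with hB
  have e : X 2 * f = A * zeta (g + 1) + B * zeta (g + 2) + c * k * X 2 * zeta g := by
    rw [e1, ← e2]; ring
  have p2 : sb 2 0 (X 2) = 0 := by simp [sb]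
  have es := congrArg (sb 2 0) e
  simp only [map_add, map_mul, p2, zero_mul, mul_zero, add_zero] at es
  obtain ⟨t, ht⟩ := zz_syz (g + 1) (sb 2 0 A) (sb 2 0 B) es.symm
  have ht2 : sb 2 0 A = - (t * zz (g + 2)) := by
    apply mul_left_cancel₀ (zz_ne (g + 1))
    have es' : 0 = sb 2 0 A * zz (g + 1) + sb 2 0 B * zz (g + 2) := es
    linear_combination - es' - zz (g + 2) * ht
  obtain ⟨u, hu⟩ := sub_sb 2 0 A
  obtain ⟨v, hv⟩ := sub_sb 2 0 B
  obtain ⟨u', hu'⟩ := sub_sb 2 0 (zeta (g + 1))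
  obtain ⟨v', hv'⟩ := sub_sb 2 0 (zeta (g + 2))
  rw [map_zero, sub_zero] at hu hv hu' hv'
  change _ - zz _ = _ at hu' hv'
  have : f = (u + t * v') * zeta (g + 1) + (v - t * u') * zeta (g + 2) + c * k * zeta g := by
    have hX : (X 2 : MvPolynomial (Fin 3) ℂ) ≠ 0 := X_ne_zero 2
    apply mul_left_cancel₀ hX
    linear_combination e + zeta (g + 1) * (hu + ht2 + t * hv') + zeta (g + 2) * (hv + ht - t * hu')
  rw [this]
  exact Ideal.add_mem _ (Ideal.add_mem _ (Ideal.mul_mem_left _ _ (zJ1 g))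
    (Ideal.mul_mem_left _ _ (zJ2 g))) (Ideal.mul_mem_left _ _ (zJ0 g))

theorem gamma_pow_inj {g : ℕ} {f : MvPolynomial (Fin 3) ℂ} (b : ℕ)
    (h : X 2 ^ b * f ∈ J (g + b)) : f ∈ J g := by
  induction b with
  | zero => simpa using h
  | succ b ih =>
    rw [pow_succ', mul_assoc] at h
    exact ih (gamma_inj h)

/-! ### Lower bound -/

theorem unit_add {B : Type*} [CommRing B] [IsLocalRing B] {u b : B}
    (hb : b ∈ IsLocalRing.maximalIdeal B) (hu : IsUnit u) : IsUnit (u + b) := by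
  by_contra hnu
  have h1 : u + b ∈ IsLocalRing.maximalIdeal B := (IsLocalRing.mem_maximalIdeal _).2 hnu
  have h2 : u ∈ IsLocalRing.maximalIdeal B := (Ideal.add_mem_iff_left _ hb).1 h1
  exact (IsLocalRing.mem_maximalIdeal _).1 h2 hu

theorem lower (G : ℕ) (hG : 1 ≤ G) : (X 1 ^ 2 - 64) ^ (2 * G) ∉ J (2 * G + 1) := by
  intro hx
  let Q := MvPolynomial (Fin 3) ℂ ⧸ J (2 * G + 1)
  have hJ : J (2 * G + 1) ≤ RingHom.ker ev := (J_anti (by omega)).trans J1_le_ker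
  let evQ : Q →+* ℂ := Ideal.Quotient.lift (J (2 * G + 1)) ev.toRingHom (fun a ha => hJ ha)
  let M : Ideal Q := RingHom.ker evQ
  have : M.IsPrime := RingHom.ker_isPrime evQ
  let B := Localization.AtPrime M
  let φ : MvPolynomial (Fin 3) ℂ →+* B := (algebraMap Q B).comp (Ideal.Quotient.mk _)
  have hφJ : ∀ f ∈ J (2 * G + 1), φ f = 0 := by
    intro f hf
    show algebraMap Q B (Ideal.Quotient.mk _ f) = 0
    rw [Ideal.Quotient.eq_zero_iff_mem.2 hf, map_zero]
  have hM : M = Ideal.map (Ideal.Quotient.mk (J (2 * G + 1))) (Ideal.span {X 0, X 1 - 8, X 2}) := by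
    apply le_antisymm
    · intro y hy
      obtain ⟨f, rfl⟩ := Ideal.Quotient.mk_surjective y
      have hf : ev f = 0 := hy
      apply Ideal.mem_map_of_mem
      simpa [hf] using sub_ev_mem_span f
    · rw [Ideal.map_le_iff_le_comap]
      intro f hf
      exact J1_le_ker (span_le_J1 hf)
  have hmax : IsLocalRing.maximalIdeal B = Ideal.span {φ (X 0), φ (X 1 - 8), φ (X 2)} := by
    have h1 := congrArg (Ideal.map (algebraMap Q B)) hM
    rw [Ideal.map_map, Ideal.map_span, Set.image_insert_eq, Set.image_insert_eq,
      Set.image_singleton] at h1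
    exact (Localization.AtPrime.map_eq_maximalIdeal (I := M)).symm.trans h1
  have hbm : φ (X 1 - 8) ∈ IsLocalRing.maximalIdeal B := by
    rw [hmax]; exact Ideal.subset_span (by simp)
  have hn : ∀ n : ℕ, n ≠ 0 → IsUnit (n : B) := by
    intro n h
    simpa using (natUnit n h).map φ
  have h16 : IsUnit (16 + φ (X 1 - 8)) :=
    unit_add (B := B) (u := 16) hbm (by simpa using hn 16 (by norm_num))
  have hb0 : φ (X 1 - 8) ^ (2 * G) = 0 := by
    have h1 := hφJ _ hx
    have e : (X 1 ^ 2 - 64 : MvPolynomial (Fin 3) ℂ) = (16 + (X 1 - 8)) * (X 1 - 8) := by ring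
    rw [e, map_pow, map_mul, mul_pow, map_add, map_ofNat] at h1
    exact (h16.pow _).mul_right_eq_zero.1 h1
  have key := local_key (B := B) (α := φ (X 0)) (b := φ (X 1 - 8)) (γ := φ (X 2))
    (z := fun n => φ (zeta n)) hmax
    (by rw [IsLocalRing.jacobson_eq_maximalIdeal _ bot_ne_top])
    (by
      intro n
      rw [zeta_rec]
      simp only [map_add, map_mul, map_sub, map_pow, map_neg, map_one, map_natCast, map_ofNat]
      ring)
    (by simp [zeta_zero]) (by simp [zeta_one]) (by simp only [zeta_two, map_add, map_mul])
    h16 hn G hG (hφJ _ (zJ0 _)) (hφJ _ (zJ1 _)) (hφJ _ (zJ2 _)) hb0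
  rw [← map_pow] at key
  obtain ⟨⟨u, hu⟩, hu2⟩ := (IsLocalization.map_eq_zero_iff M.primeCompl B _).1 key
  obtain ⟨f, rfl⟩ := Ideal.Quotient.mk_surjective u
  have h1 : X 2 ^ (2 * G) * f ∈ J (1 + 2 * G) := by
    rw [add_comm 1 (2 * G), mul_comm (X 2 ^ (2 * G)) f, ← Ideal.Quotient.eq_zero_iff_mem, map_mul]
    exact hu2
  exact hu (J1_le_ker (gamma_pow_inj _ h1))

/-- The minimal n ≥ 1 with (β² − 64)ⁿ ∈ J_g is exactly 2⌈g/2⌉ − 1. -/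
theorem nilpotency_degree (g : ℕ) (hg : 1 ≤ g) :
    IsLeast {n : ℕ | 1 ≤ n ∧ (X 1 ^ 2 - 64) ^ n ∈ J g} (2 * ((g + 1) / 2) - 1) := by
  set G := (g + 1) / 2 with hGdef
  have hG : 1 ≤ G := by omega
  refine ⟨⟨by omega, J_anti (by omega) (upper G hG)⟩, ?_⟩
  rintro n ⟨hn, hmem⟩
  by_contra hlt
  push Not at hlt
  obtain ⟨K, hK⟩ : ∃ K, G = K + 1 := ⟨G - 1, by omega⟩
  refine lower K (by omega) ?_
  have h1 : (X 1 ^ 2 - 64) ^ n ∈ J (2 * K + 1) := J_anti (by omega) hmem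
  exact Ideal.pow_mem_of_pow_mem _ h1 (by omega)
end

section
/- For every g ≥ 0, the quotient ring ℂ[α,γ]/J_g^- is a finite-dimensional ℂ-vector space of dimension ⌊g/2⌋·(⌊g/2⌋ + 1); in particular dim ℂ[α,γ]/J_g^- = g(g+2)/4 when g is even, and J_g^- and J_{g−1}^- have equal codimension when g is odd. -/
open MvPolynomial

/-- ζ_k^- ∈ ℂ[α,γ] (variables: X 0 = α, X 1 = γ):
    ζ_{k+1}^- = α ζ_k^- + 2k(k−1) γ ζ_{k−2}^- for k even, and
    ζ_{k+1}^- = α ζ_k^- − 16k² ζ_{k−1}^- + 2k(k−1) γ ζ_{k−2}^- for k odd. -/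
noncomputable def zm : ℕ → MvPolynomial (Fin 2) ℂ
  | 0 => 1
  | 1 => X 0
  | 2 => X 0 * zm 1 - C 16 * zm 0
  | (n + 3) =>
      if n % 2 = 0 then
        X 0 * zm (n + 2) + C (2 * ((n : ℂ) + 2) * ((n : ℂ) + 1)) * X 1 * zm n
      else
        X 0 * zm (n + 2) - C (16 * ((n : ℂ) + 2) ^ 2) * zm (n + 1)
          + C (2 * ((n : ℂ) + 2) * ((n : ℂ) + 1)) * X 1 * zm n

/-- ζ_k^- for an integer index k, with ζ_k^- = 0 for k < 0. -/
noncomputable def zmZ (k : ℤ) : MvPolynomial (Fin 2) ℂ :=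
  if k < 0 then 0 else zm k.toNat

/-- J_g^- = (ζ_g^-, ζ_{g+1}^-, ζ_{g+2}^-) ⊆ ℂ[α,γ]. -/
noncomputable def Jm (g : ℕ) : Ideal (MvPolynomial (Fin 2) ℂ) :=
  Ideal.span {zm g, zm (g + 1), zm (g + 2)}

namespace ZM

abbrev R := MvPolynomial (Fin 2) ℂ

/-- coefficient of `ζ_{n+1}` -/
noncomputable def ca (n : ℕ) : ℂ := if n % 2 = 0 then 0 else 16 * ((n : ℂ) + 2) ^ 2
/-- coefficient of `γ ζ_n` -/
noncomputable def cb (n : ℕ) : ℂ := 2 * ((n : ℂ) + 2) * ((n : ℂ) + 1)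

lemma cb_ne (n : ℕ) : cb n ≠ 0 := by
  unfold cb
  have h1 : (n : ℂ) + 1 ≠ 0 := by exact_mod_cast Nat.succ_ne_zero n
  have h2 : (n : ℂ) + 2 ≠ 0 := by exact_mod_cast Nat.succ_ne_zero (n+1)
  simp [h1, h2]

lemma zm_zero : zm 0 = 1 := by rw [zm]
lemma zm_one : zm 1 = X 0 := by rw [zm]
lemma zm_two : zm 2 = X 0 * zm 1 - C 16 * zm 0 := by rw [zm_zero, zm_one, zm, zm_one, zm_zero]
lemma zm_rec (n : ℕ) : zm (n + 3) =
    X 0 * zm (n + 2) - C (ca n) * zm (n + 1) + C (cb n) * X 1 * zm n := by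
  rw [zm]
  unfold ca cb
  split_ifs <;> simp

/-- monicity in α -/
lemma monic_zm (k : ℕ) : (finSuccEquiv ℂ 1 (zm k)).IsMonicOfDegree k := by
  induction k using Nat.strong_induction_on with
  | _ k ih =>
    match k with
    | 0 => rw [zm_zero, map_one]; exact Polynomial.isMonicOfDegree_zero_iff.2 rfl
    | 1 => rw [zm_one, finSuccEquiv_X_zero]; exact Polynomial.isMonicOfDegree_X _
    | 2 =>
      have h1 := (Polynomial.isMonicOfDegree_X (MvPolynomial (Fin 1) ℂ)).mul (ih 1 (by omega))
      rw [zm_two, map_sub, map_mul, finSuccEquiv_X_zero]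
      refine h1.sub ?_
      rw [zm_zero, mul_one]
      have : finSuccEquiv ℂ 1 (C 16) = Polynomial.C (C 16) := by
        simp [finSuccEquiv_apply]
      rw [this]
      simp
    | n + 3 =>
      have h1 := (Polynomial.isMonicOfDegree_X (MvPolynomial (Fin 1) ℂ)).mul (ih (n+2) (by omega))
      have hC : ∀ a : ℂ, finSuccEquiv ℂ 1 (C a) = Polynomial.C (C a) := by
        intro a; simp [finSuccEquiv_apply]
      have hX : finSuccEquiv ℂ 1 (X 1) = Polynomial.C (X 0) := finSuccEquiv_X_succ (j := 0)
      rw [zm_rec, map_add, map_sub, map_mul, map_mul, map_mul, map_mul, finSuccEquiv_X_zero,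
        hC, hC, hX, ← Polynomial.C_mul]
      rw [show n + 3 = 1 + (n + 2) by omega]
      refine (h1.sub ?_).add_right ?_
      · refine (Polynomial.natDegree_C_mul_le _ _).trans_lt ?_
        rw [(ih (n+1) (by omega)).natDegree_eq]; omega
      · refine (Polynomial.natDegree_C_mul_le _ _).trans_lt ?_
        rw [(ih n (by omega)).natDegree_eq]; omega

noncomputable def seq : Polynomial.Sequence (MvPolynomial (Fin 1) ℂ) where
  elems' k := finSuccEquiv ℂ 1 (zm k)
  degree_eq' k := by
    rw [Polynomial.degree_eq_natDegree (monic_zm k).ne_zero, (monic_zm k).natDegree_eq]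

noncomputable def bas0 : Module.Basis ((Fin 1 →₀ ℕ) × ℕ) ℂ (Polynomial (MvPolynomial (Fin 1) ℂ)) :=
  (basisMonomials (Fin 1) ℂ).smulTower (seq.basis (fun i => by
    have : (seq i).Monic := (monic_zm i).monic
    rw [this.leadingCoeff]; exact isUnit_one))

noncomputable def bas : Module.Basis (ℕ × ℕ) ℂ R :=
  (bas0.map (finSuccEquiv ℂ 1).toLinearEquiv.symm).reindex
    (Equiv.prodCongr (Finsupp.uniqueEquiv (0 : Fin 1)) (Equiv.refl ℕ))

lemma bas_apply (p : ℕ × ℕ) : bas p = X 1 ^ p.1 * zm p.2 := by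
  have hX : finSuccEquiv ℂ 1 (X 1) = Polynomial.C (X 0) := finSuccEquiv_X_succ (j := 0)
  apply (finSuccEquiv ℂ 1).injective
  rw [map_mul, map_pow, hX]
  simp [bas, bas0, Module.Basis.smulTower_apply, seq]
  rw [← Polynomial.C_pow, Polynomial.smul_eq_C_mul]
  congr 2
  rw [X_pow_eq_monomial]

/-- Quotient by the span of part of a basis. -/
lemma quot_basis {ι V : Type*} [AddCommGroup V] [Module ℂ V] (B : Module.Basis ι ℂ V) (S : Set ι)
    (hS : Sᶜ.Finite) :
    FiniteDimensional ℂ (V ⧸ Submodule.span ℂ (B '' S)) ∧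
    Module.finrank ℂ (V ⧸ Submodule.span ℂ (B '' S)) = Sᶜ.ncard := by
  let f : V →ₗ[ℂ] ((Sᶜ : Set ι) →₀ ℂ) := (Finsupp.lsubtypeDomain (Sᶜ)).comp B.repr.toLinearMap
  have hk : LinearMap.ker f = Submodule.span ℂ (B '' S) := by
    ext v
    rw [B.mem_span_image, LinearMap.mem_ker]
    constructor
    · intro h i hi
      by_contra hn
      have := DFunLike.congr_fun h ⟨i, hn⟩
      have h' : B.repr v i = 0 := this
      simp [h'] at hi
    · intro h
      ext ⟨i, hi⟩
      simp only [f, LinearMap.comp_apply, Finsupp.lsubtypeDomain_apply, Finsupp.subtypeDomain_apply,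
        Finsupp.zero_apply]
      by_contra hn
      exact hi (h (by simpa using hn))
  have hs : Function.Surjective f := by
    intro w
    refine ⟨B.repr.symm (w.embDomain (Function.Embedding.subtype _)), ?_⟩
    ext i
    simp only [f, LinearMap.comp_apply, LinearEquiv.coe_coe, LinearEquiv.apply_symm_apply,
      Finsupp.lsubtypeDomain_apply, Finsupp.subtypeDomain_apply]
    exact Finsupp.embDomain_apply_self (Function.Embedding.subtype _) w i
  have e := f.quotKerEquivOfSurjective hs
  rw [hk] at e
  haveI : Fintype (Sᶜ : Set ι) := hS.fintype
  refine ⟨Module.Finite.equiv e.symm, ?_⟩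
  rw [e.finrank_eq, Module.finrank_finsupp_self, Set.ncard, Set.encard, ENat.card_eq_coe_fintype_card]
  rfl

def SS (m : ℕ) : Set (ℕ × ℕ) := {p | m ≤ p.1 + p.2 / 2}

lemma SS_compl (m : ℕ) : (SS m)ᶜ =
    ((Finset.range m).sigma (fun c => Finset.range (2 * (m - c)))).image
      (fun x => ((x.1, x.2) : ℕ × ℕ)) := by
  ext ⟨c, k⟩
  simp only [SS, Set.mem_compl_iff, Set.mem_setOf_eq, Finset.coe_image, Set.mem_image,
    Finset.mem_coe, Finset.mem_sigma, Finset.mem_range, Sigma.exists, Prod.mk.injEq]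
  constructor
  · intro h; exact ⟨c, k, ⟨by omega, by omega⟩, rfl, rfl⟩
  · rintro ⟨a, b, ⟨h1, h2⟩, rfl, rfl⟩; omega

lemma SS_card (m : ℕ) : ((SS m)ᶜ).ncard = m * (m + 1) := by
  rw [SS_compl, Set.ncard_coe_finset, Finset.card_image_of_injective, Finset.card_sigma]
  · simp only [Finset.card_range]
    induction m with
    | zero => simp
    | succ m ih =>
      rw [Finset.sum_range_succ']
      simp only [Nat.add_sub_add_right]
      rw [ih]; simp; ring
  · rintro ⟨a, b⟩ ⟨c, d⟩ h
    simp at h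
    simp [h.1, h.2]

noncomputable def L (m : ℕ) : Submodule ℂ R := Submodule.span ℂ (bas '' SS m)

lemma mem_L {m c k : ℕ} (h : m ≤ c + k / 2) : X 1 ^ c * zm k ∈ L m :=
  Submodule.subset_span ⟨(c, k), h, bas_apply _⟩

lemma C_mul_mem_L {m : ℕ} (a : ℂ) {v : R} (hv : v ∈ L m) : C a * v ∈ L m := by
  rw [C_mul']; exact (L m).smul_mem a hv

lemma L_induction {m : ℕ} {p : R → Prop} (h1 : ∀ c k, m ≤ c + k / 2 → p (X 1 ^ c * zm k))
    (h0 : p 0) (hadd : ∀ x y, p x → p y → p (x + y)) (hs : ∀ (a : ℂ) x, p x → p (C a * x))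
    {v : R} (hv : v ∈ L m) : p v := by
  induction hv using Submodule.span_induction with
  | mem x hx =>
    obtain ⟨⟨c, k⟩, h, rfl⟩ := hx
    rw [bas_apply]; exact h1 c k h
  | zero => exact h0
  | add x y _ _ hx hy => exact hadd x y hx hy
  | smul a x _ hx => rw [← C_mul']; exact hs a x hx

lemma gamma_mul_mem {m : ℕ} {v : R} (hv : v ∈ L m) : X 1 * v ∈ L (m + 1) := by
  refine L_induction (p := fun v => X 1 * v ∈ L (m + 1)) ?_ ?_ ?_ ?_ hv
  · intro c k h
    rw [← mul_assoc, ← pow_succ']; exact mem_L (by omega)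
  · simp
  · intro x y hx hy; rw [mul_add]; exact add_mem hx hy
  · intro a x hx; rw [mul_left_comm]; exact C_mul_mem_L a hx

lemma L_anti {m : ℕ} : L (m + 1) ≤ L m :=
  Submodule.span_mono (Set.image_mono (fun p (hp : m + 1 ≤ _) => (by
    change m ≤ _; omega)))

lemma alpha_mul_mem {m : ℕ} {v : R} (hv : v ∈ L m) : X 0 * v ∈ L m := by
  refine L_induction (p := fun v => X 0 * v ∈ L m) ?_ ?_ ?_ ?_ hv
  · intro c k h
    match k with
    | 0 =>
      have : (X 0 : R) * (X 1 ^ c * zm 0) = X 1 ^ c * zm 1 := by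
        rw [zm_one, zm_zero]; ring
      rw [this]; exact mem_L (by omega)
    | 1 =>
      have : (X 0 : R) * (X 1 ^ c * zm 1) = X 1 ^ c * zm 2 + C 16 * (X 1 ^ c * zm 0) := by
        rw [zm_two]; ring
      rw [this]
      exact add_mem (mem_L (by omega)) (C_mul_mem_L _ (mem_L (by omega)))
    | n + 2 =>
      have : (X 0 : R) * (X 1 ^ c * zm (n + 2)) = X 1 ^ c * zm (n + 3) +
          C (ca n) * (X 1 ^ c * zm (n + 1)) - C (cb n) * (X 1 ^ (c + 1) * zm n) := by
        rw [zm_rec]; ring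
      rw [this]
      refine sub_mem (add_mem (mem_L (by omega)) ?_) (C_mul_mem_L _ (mem_L (by omega)))
      by_cases hn : n % 2 = 0
      · simp [ca, hn]
      · exact C_mul_mem_L _ (mem_L (by omega))
  · simp
  · intro x y hx hy; rw [mul_add]; exact add_mem hx hy
  · intro a x hx; rw [mul_left_comm]; exact C_mul_mem_L a hx

lemma mul_mem_L {m : ℕ} (p : R) : ∀ {v : R}, v ∈ L m → p * v ∈ L m := by
  induction p using MvPolynomial.induction_on with
  | C a => intro v hv; exact C_mul_mem_L a hv
  | add p q hp hq => intro v hv; rw [add_mul]; exact add_mem (hp hv) (hq hv)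
  | mul_X p i hp =>
    intro v hv
    rw [mul_assoc]
    apply hp
    fin_cases i
    · exact alpha_mul_mem hv
    · exact L_anti (gamma_mul_mem hv)

noncomputable def I (m : ℕ) : Ideal R :=
  { (L m).toAddSubmonoid with smul_mem' := fun p v hv => mul_mem_L p hv }

lemma mem_I {m : ℕ} {v : R} : v ∈ I m ↔ v ∈ L m := Iff.rfl

lemma I_dim (m : ℕ) : FiniteDimensional ℂ (R ⧸ I m) ∧
    Module.finrank ℂ (R ⧸ I m) = m * (m + 1) := by
  have hfin : ((SS m)ᶜ).Finite := by rw [SS_compl]; exact Finset.finite_toSet _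
  obtain ⟨h1, h2⟩ := quot_basis bas (SS m) hfin
  rw [SS_card] at h2
  have he : (I m).restrictScalars ℂ = Submodule.span ℂ (bas '' SS m) := rfl
  rw [← he] at h1 h2
  have e : (R ⧸ (I m).restrictScalars ℂ) ≃ₗ[ℂ] (R ⧸ I m) :=
    Submodule.Quotient.restrictScalarsEquiv ℂ (I m)
  exact ⟨Module.Finite.equiv e, by rw [← e.finrank_eq, h2]⟩

lemma zm_mem_Jm (g j : ℕ) : zm (g + j) ∈ Jm g := by
  induction j using Nat.strong_induction_on with
  | _ j ih =>
    match j with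
    | 0 => exact Ideal.subset_span (by simp)
    | 1 => exact Ideal.subset_span (by simp)
    | 2 => exact Ideal.subset_span (by simp)
    | n + 3 =>
      rw [show g + (n + 3) = (g + n) + 3 by ring, zm_rec]
      refine add_mem (sub_mem ?_ ?_) ?_
      · exact Ideal.mul_mem_left _ _ (ih (n + 2) (by omega))
      · exact Ideal.mul_mem_left _ _ (ih (n + 1) (by omega))
      · exact Ideal.mul_mem_left _ _ (ih n (by omega))

lemma C_mul_cancel {J : Ideal R} {a : ℂ} (ha : a ≠ 0) {v : R} (h : C a * v ∈ J) : v ∈ J := by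
  have := J.mul_mem_left (C a⁻¹) h
  rwa [← mul_assoc, ← C_mul, inv_mul_cancel₀ ha, C_1, one_mul] at this

lemma key_mem (m i : ℕ) : ∀ j, i + j = m →
    X 1 ^ j * zm (2 * i + 2) ∈ Jm (2 * m) ∧ X 1 ^ j * zm (2 * i) ∈ Jm (2 * m) ∧
    X 1 ^ j * zm (2 * i + 1) ∈ Jm (2 * m) := by
  intro j
  induction j generalizing i with
  | zero =>
    rintro rfl
    simp only [pow_zero, one_mul, add_zero]
    exact ⟨zm_mem_Jm _ 2, zm_mem_Jm _ 0, zm_mem_Jm _ 1⟩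
  | succ j ih =>
    intro h
    obtain ⟨h1, h2, h3⟩ := ih (i + 1) (by omega)
    rw [show 2 * (i + 1) = 2 * i + 2 by ring] at h1 h2 h3
    have hA : X 1 ^ (j+1) * zm (2 * i) ∈ Jm (2 * m) := by
      apply C_mul_cancel (cb_ne (2 * i))
      have : C (cb (2 * i)) * (X 1 ^ (j+1) * zm (2 * i)) =
          X 1 ^ j * zm (2 * i + 2 + 1) - X 0 * (X 1 ^ j * zm (2 * i + 2)) := by
        have := zm_rec (2 * i)
        have hz : ca (2 * i) = 0 := by simp [ca]
        rw [hz] at this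
        rw [show 2 * i + 2 + 1 = 2 * i + 3 by ring, this]; simp; ring
      rw [this]
      exact sub_mem h3 (Ideal.mul_mem_left _ _ h2)
    refine ⟨?_, hA, ?_⟩
    · rw [pow_succ', mul_assoc]; exact Ideal.mul_mem_left _ _ h2
    · apply C_mul_cancel (cb_ne (2 * i + 1))
      have : C (cb (2 * i + 1)) * (X 1 ^ (j+1) * zm (2 * i + 1)) =
          X 1 ^ j * zm (2 * i + 2 + 2) - X 0 * (X 1 ^ j * zm (2 * i + 2 + 1))
            + C (ca (2 * i + 1)) * (X 1 ^ j * zm (2 * i + 2)) := by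
        rw [show 2 * i + 2 + 2 = 2 * i + 1 + 3 by ring, zm_rec,
          show 2 * i + 2 + 1 = 2 * i + 1 + 2 by ring, show 2 * i + 2 = 2 * i + 1 + 1 by ring]
        ring
      rw [this]
      exact add_mem (sub_mem h1 (Ideal.mul_mem_left _ _ h3)) (Ideal.mul_mem_left _ _ h2)

lemma Jm_even (m : ℕ) : Jm (2 * m) = I m := by
  have hz : ∀ k, 2 * m ≤ k → zm k ∈ I m := by
    intro k hk
    rw [mem_I]
    have := mem_L (m := m) (c := 0) (k := k) (by omega)
    simpa using this
  apply le_antisymm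
  · rw [Jm, Ideal.span_le]
    rintro v (rfl | rfl | rfl) <;> exact hz _ (by omega)
  · intro v hv
    refine L_induction (p := fun v => v ∈ Jm (2 * m)) ?_ ?_ ?_ ?_ (mem_I.1 hv)
    · intro c k h
      by_cases hk : 2 * m ≤ k
      · obtain ⟨j, rfl⟩ := Nat.exists_eq_add_of_le hk
        exact Ideal.mul_mem_left _ _ (zm_mem_Jm _ _)
      · obtain ⟨d, rfl⟩ : ∃ d, c = d + (m - k / 2) := ⟨c - (m - k / 2), by omega⟩
        rw [pow_add, mul_assoc]
        apply Ideal.mul_mem_left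
        obtain ⟨_, h2, h3⟩ := key_mem m (k / 2) (m - k / 2) (by omega)
        rcases Nat.mod_two_eq_zero_or_one k with h0 | h0
        · rwa [show 2 * (k / 2) = k by omega] at h2
        · rwa [show 2 * (k / 2) + 1 = k by omega] at h3
    · exact zero_mem _
    · intro x y hx hy; exact add_mem hx hy
    · intro a x hx; exact Ideal.mul_mem_left _ _ hx

lemma Jm_succ_le (g : ℕ) : Jm (g + 1) ≤ Jm g := by
  rw [Jm, Ideal.span_le]
  rintro v (rfl | rfl | rfl)
  · exact zm_mem_Jm g 1
  · exact zm_mem_Jm g 2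
  · exact zm_mem_Jm g 3

/-- The numerical heart of the odd case. -/
lemma numeric (m : ℕ) (x y : ℕ → ℂ) (μ : ℂ)
    (h0 : y 0 = μ * x 0) (h0' : μ * y 0 = 16 * x 0)
    (h1 : ∀ i < m, y (i + 1) = μ * x (i + 1) + cb (2 * i) * x i)
    (h2 : ∀ i < m, μ * y (i + 1) = ca (2 * i + 1) * x (i + 1) - cb (2 * i + 1) * y i)
    (hm : y m = 0) : ∀ i ≤ m, x i = 0 := by
  by_contra hcon
  push Not at hcon
  classical
  obtain ⟨hjm, hj⟩ := Nat.find_spec hcon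
  have hmin : ∀ i, i < Nat.find hcon → x i = 0 := by
    intro i hi
    have := Nat.find_min hcon hi
    push Not at this
    exact this (by omega)
  generalize Nat.find hcon = j at hjm hj hmin
  have hca : ∀ i : ℕ, ca (2 * i + 1) = 16 * (2 * ((i + 1 : ℕ) : ℂ) + 1) ^ 2 := by
    intro i
    have : (2 * i + 1) % 2 ≠ 0 := by omega
    rw [ca, if_neg this]; push_cast; ring
  have hμ : y j = μ * x j ∧ μ ^ 2 = (4 * (2 * (j : ℂ) + 1)) ^ 2 := by
    match j with
    | 0 =>
      refine ⟨h0, mul_right_cancel₀ hj ?_⟩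
      rw [h0] at h0'
      push_cast
      linear_combination h0'
    | 1 =>
      have e1 := h1 0 (by omega)
      have e2 := h2 0 (by omega)
      have z := hmin 0 (by omega)
      rw [z] at h0
      rw [h0] at e2
      rw [z] at e1
      simp only [zero_add] at e1 e2
      have := hca 0
      simp only [zero_add] at this
      rw [this] at e2
      refine ⟨by linear_combination e1, mul_right_cancel₀ hj ?_⟩
      push_cast at *
      linear_combination e2 - μ * e1
    | i + 2 =>
      have e1 := h1 (i + 1) (by omega)
      have e2 := h2 (i + 1) (by omega)
      have e3 := h1 i (by omega)
      rw [hmin i (by omega), hmin (i + 1) (by omega)] at e3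
      rw [hmin (i + 1) (by omega)] at e1
      rw [hca] at e2
      refine ⟨by linear_combination e1, mul_right_cancel₀ hj ?_⟩
      push_cast at *
      linear_combination e2 - μ * e1 - cb (2 * (i + 1) + 1) * e3
  obtain ⟨hyj, hμ⟩ := hμ
  obtain ⟨ε, hε, hμε⟩ : ∃ ε : ℂ, ε ^ 2 = 1 ∧ μ = ε * (4 * (2 * (j : ℂ) + 1)) := by
    rcases sq_eq_sq_iff_eq_or_eq_neg.1 hμ with h | h
    · exact ⟨1, by norm_num, by rw [h]; ring⟩
    · exact ⟨-1, by norm_num, by rw [h]; ring⟩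
  have main : ∀ n, j + n ≤ m → ∃ p q : ℝ, 0 < p ∧ 0 < q ∧ x (j + n) = ε ^ n * p * x j ∧
      y (j + n) = ε ^ (n + 1) * q * x j := by
    intro n
    induction n with
    | zero =>
      intro _
      refine ⟨1, 4 * (2 * (j : ℝ) + 1), by norm_num, by positivity, by simp, ?_⟩
      rw [add_zero, hyj, hμε]; push_cast; ring
    | succ n ih =>
      intro hn
      obtain ⟨p, q, hp, hq, hx, hy⟩ := ih (by omega)
      have e1 := h1 (j + n) (by omega)
      have e2 := h2 (j + n) (by omega)
      rw [hca] at e2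
      set c : ℝ := 2 * ((2 * (j + n : ℕ) : ℝ) + 2) * ((2 * (j + n : ℕ) : ℝ) + 1) with hc
      set d : ℝ := 2 * ((2 * (j + n : ℕ) + 1 : ℝ) + 2) * ((2 * (j + n : ℕ) + 1 : ℝ) + 1) with hd
      have hcC : cb (2 * (j + n)) = (c : ℂ) := by rw [cb, hc]; push_cast; ring
      have hdC : cb (2 * (j + n) + 1) = (d : ℂ) := by rw [cb, hd]; push_cast; ring
      have hcp : 0 < c := by rw [hc]; positivity
      have hdp : 0 < d := by rw [hd]; positivity
      set M : ℝ := 4 * (2 * (j : ℝ) + 1) with hM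
      have hMp : 0 < M := by rw [hM]; positivity
      set D : ℝ := 16 * (2 * ((j + n + 1 : ℕ) : ℝ) + 1) ^ 2 - M ^ 2 with hD
      have hDp : 0 < D := by
        rw [hD, hM]; push_cast
        have : (0 : ℝ) ≤ j := by positivity
        have : (0 : ℝ) ≤ n := by positivity
        nlinarith [mul_nonneg ‹(0 : ℝ) ≤ j› ‹(0 : ℝ) ≤ n›]
      have hμM : μ = ε * (M : ℂ) := by rw [hμε, hM]; push_cast; ring
      have hDC : (16 * (2 * ((j + n + 1 : ℕ) : ℂ) + 1) ^ 2) = (D : ℂ) + (M : ℂ) ^ 2 := by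
        rw [hD]; push_cast; ring
      have hDne : (D : ℂ) ≠ 0 := by exact_mod_cast hDp.ne'
      rw [hcC] at e1
      rw [hdC, hDC] at e2
      have hX : x (j + n + 1) = ε ^ (n + 1) * ((M * c * p + d * q) / D : ℝ) * x j := by
        apply mul_left_cancel₀ hDne
        have : (D : ℂ) * (ε ^ (n + 1) * ((M * c * p + d * q) / D : ℝ) * x j) =
            ε ^ (n + 1) * (M * c * p + d * q) * x j := by
          push_cast; field_simp
        rw [this]
        rw [hx, hy] at *
        rw [hμM] at e1 e2
        rw [e1] at e2
        have hε' : ε ^ (n + 1) = ε ^ n * ε := pow_succ _ _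
        rw [hε'] at *
        linear_combination (-1 : ℂ) * e2 + M ^ 2 * x (j + n + 1) * hε
      refine ⟨(M * c * p + d * q) / D, M * ((M * c * p + d * q) / D) + c * p,
        by positivity, by positivity, hX, ?_⟩
      rw [← add_assoc, e1, hX, hx, hμM]
      push_cast
      linear_combination (- ε ^ n * c * p * x j) * hε
  obtain ⟨n, hn⟩ := Nat.exists_eq_add_of_le hjm
  obtain ⟨p, q, hp, hq, hx, hy⟩ := main n (by omega)
  rw [← hn, hm] at hy
  have hεne : ε ≠ 0 := by rintro rfl; norm_num at hε
  have hqne : (q : ℂ) ≠ 0 := by exact_mod_cast hq.ne'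
  exact mul_ne_zero (mul_ne_zero (pow_ne_zero _ hεne) hqne) hj hy.symm

lemma Jm_odd (m : ℕ) : Jm (2 * m + 1) = I m := by
  apply le_antisymm
  · rw [← Jm_even]; exact Jm_succ_le _
  set J := Jm (2 * m + 1) with hJ
  have hIJ : I (m + 1) ≤ J := by
    rw [← Jm_even]; exact Jm_succ_le _
  let π := Ideal.Quotient.mk J
  let N : Ideal (R ⧸ J) := (I m).map π
  haveI : FiniteDimensional ℂ (R ⧸ J) := by
    haveI := (I_dim (m + 1)).1
    exact Module.Finite.of_surjective (Ideal.Quotient.factorₐ ℂ hIJ).toLinearMap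
      (Ideal.Quotient.factor_surjective hIJ)
  haveI : FiniteDimensional ℂ N :=
    inferInstanceAs (FiniteDimensional ℂ (N.restrictScalars ℂ))
  suffices hN : Subsingleton N by
    intro v hv
    have h1 : π v ∈ N := Ideal.mem_map_of_mem π hv
    have h2 : (⟨π v, h1⟩ : N) = 0 := Subsingleton.elim _ _
    exact Ideal.Quotient.eq_zero_iff_mem.1 (congrArg Subtype.val h2)
  by_contra hns
  rw [not_subsingleton_iff_nontrivial] at hns
  let T : Module.End ℂ N := Algebra.lsmul ℂ ℂ N (π (X 0))
  obtain ⟨μ, hμ⟩ := Module.End.exists_eigenvalue (K := ℂ) (V := Module.Dual ℂ N) T.dualMap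
  obtain ⟨l, hl, hl0⟩ := hμ.exists_hasEigenvector
  rw [Module.End.mem_eigenspace_iff] at hl
  apply hl0
  -- functional on I m
  let F : I m → ℂ := fun v => l ⟨π v, Ideal.mem_map_of_mem π v.2⟩
  have Fadd : ∀ v w, F (v + w) = F v + F w := by
    intro v w
    simp only [F]
    rw [← map_add]; rfl
  have FC : ∀ (a : ℂ) v, F ((C a : R) • v) = a * F v := by
    intro a v
    simp only [F]
    rw [← smul_eq_mul, ← map_smul]
    congr 1
    apply Subtype.ext
    change π (C a * (v : R)) = a • π v
    rw [C_mul']; rfl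
  have Fα : ∀ v, F ((X 0 : R) • v) = μ * F v := by
    intro v
    have := LinearMap.congr_fun hl ⟨π v, Ideal.mem_map_of_mem π v.2⟩
    simp only [F]
    rw [LinearMap.smul_apply, smul_eq_mul] at this
    rw [← this, LinearMap.dualMap_apply]
    congr 1
  have FJ : ∀ v : I m, (v : R) ∈ J → F v = 0 := by
    intro v hv
    simp only [F]
    have : (⟨π v, Ideal.mem_map_of_mem π v.2⟩ : N) = 0 :=
      Subtype.ext (Ideal.Quotient.eq_zero_iff_mem.2 hv)
    rw [this, map_zero]
  have hF0 : ∀ v, F v = 0 := by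
    have hmem : ∀ c k, m ≤ c + k / 2 → X 1 ^ c * zm k ∈ I m := fun c k h => mem_I.2 (mem_L h)
    have hmem' : ∀ c k, m + 1 ≤ c + k / 2 → X 1 ^ c * zm k ∈ J :=
      fun c k h => hIJ (mem_I.2 (mem_L h))
    let x : ℕ → ℂ := fun i => F ⟨X 1 ^ (m - i) * zm (2 * i), hmem _ _ (by omega)⟩
    let y : ℕ → ℂ := fun i => F ⟨X 1 ^ (m - i) * zm (2 * i + 1), hmem _ _ (by omega)⟩
    have h0 : y 0 = μ * x 0 := by
      simp only [x, y]
      rw [← Fα]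
      congr 1
      apply Subtype.ext
      change _ = X 0 * _
      simp [zm_one, zm_zero]; ring
    have h0' : μ * y 0 = 16 * x 0 := by
      simp only [x, y]
      rw [← Fα, ← FC, ← sub_eq_zero, sub_eq_add_neg, ← neg_one_mul, ← FC, ← Fadd]
      apply FJ
      have := hmem' m 2 (by omega)
      convert this using 1
      change X 0 * (X 1 ^ m * zm 1) + C (-1) * (C 16 * (X 1 ^ m * zm 0)) = _
      rw [zm_two, C_neg, C_1]; ring
    have h1 : ∀ i < m, y (i + 1) = μ * x (i + 1) + cb (2 * i) * x i := by
      intro i hi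
      simp only [x, y]
      rw [← Fα, ← FC, ← Fadd]
      congr 1
      apply Subtype.ext
      change X 1 ^ (m - (i + 1)) * zm (2 * i + 3) = X 0 * (X 1 ^ (m - (i + 1)) * zm (2 * i + 2)) +
        C (cb (2 * i)) * (X 1 ^ (m - i) * zm (2 * i))
      have hz : ca (2 * i) = 0 := by simp [ca]
      rw [zm_rec, hz, C_0, show m - i = m - (i + 1) + 1 by omega]
      ring
    have h2 : ∀ i < m, μ * y (i + 1) = ca (2 * i + 1) * x (i + 1) - cb (2 * i + 1) * y i := by
      intro i hi
      simp only [x, y]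
      rw [← Fα, ← FC, sub_eq_add_neg, ← neg_mul, ← FC, ← Fadd, ← sub_eq_zero,
        sub_eq_add_neg, ← neg_one_mul, ← FC, ← Fadd]
      apply FJ
      have := hmem' (m - (i + 1)) (2 * i + 1 + 3) (by omega)
      convert this using 1
      change X 0 * (X 1 ^ (m - (i + 1)) * zm (2 * i + 1 + 2)) + C (-1) *
        (C (ca (2 * i + 1)) * (X 1 ^ (m - (i + 1)) * zm (2 * i + 1 + 1)) +
        C (-cb (2 * i + 1)) * (X 1 ^ (m - i) * zm (2 * i + 1))) = _
      rw [zm_rec (2 * i + 1), show m - i = m - (i + 1) + 1 by omega, C_neg, C_neg, C_1]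
      ring
    have hm : y m = 0 := by
      apply FJ
      exact Ideal.mul_mem_left _ _ (zm_mem_Jm _ 0)
    have hx := numeric m x y μ h0 h0' h1 h2 hm
    have hy : ∀ i ≤ m, y i = 0 := by
      intro i hi
      match i with
      | 0 => rw [h0, hx 0 hi, mul_zero]
      | i + 1 => rw [h1 i hi, hx _ hi, hx i (by omega), mul_zero, mul_zero, add_zero]
    rintro ⟨v, hv⟩
    refine (L_induction (p := fun v => ∃ h : v ∈ I m, F ⟨v, h⟩ = 0) ?_ ?_ ?_ ?_ (mem_I.1 hv)).2
    · intro c k h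
      refine ⟨hmem _ _ h, ?_⟩
      by_cases hc : m + 1 ≤ c + k / 2
      · exact FJ _ (hmem' _ _ hc)
      · have hk : k / 2 ≤ m := by omega
        have hcm : c = m - k / 2 := by omega
        subst hcm
        rcases Nat.mod_two_eq_zero_or_one k with h0 | h0
        · rw [← hx (k / 2) hk]
          simp only [x]
          congr 1
          apply Subtype.ext
          change _ = X 1 ^ _ * zm (2 * (k / 2))
          rw [show 2 * (k / 2) = k by omega]
        · rw [← hy (k / 2) hk]
          simp only [y]
          congr 1
          apply Subtype.ext
          change _ = X 1 ^ _ * zm (2 * (k / 2) + 1)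
          rw [show 2 * (k / 2) + 1 = k by omega]
    · exact ⟨zero_mem _, FJ _ (zero_mem _)⟩
    · rintro a b ⟨ha, ha'⟩ ⟨hb, hb'⟩
      refine ⟨add_mem ha hb, ?_⟩
      have := Fadd ⟨a, ha⟩ ⟨b, hb⟩
      rw [ha', hb', add_zero] at this
      exact this
    · rintro a b ⟨hb, hb'⟩
      refine ⟨Ideal.mul_mem_left _ _ hb, ?_⟩
      have := FC a ⟨b, hb⟩
      rw [hb', mul_zero] at this
      exact this
  ext ⟨n, hn⟩
  obtain ⟨v, hv, rfl⟩ := (Ideal.mem_map_iff_of_surjective π Ideal.Quotient.mk_surjective).1 hn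
  exact hF0 ⟨v, hv⟩

end ZM

/-- For every g ≥ 0, ℂ[α,γ]/J_g^- is finite dimensional over ℂ of dimension
    ⌊g/2⌋·(⌊g/2⌋+1). -/
theorem finrank_quotient_Jm (g : ℕ) :
    FiniteDimensional ℂ (MvPolynomial (Fin 2) ℂ ⧸ Jm g) ∧
    Module.finrank ℂ (MvPolynomial (Fin 2) ℂ ⧸ Jm g) = (g / 2) * (g / 2 + 1) := by
  obtain h | h : g = 2 * (g / 2) ∨ g = 2 * (g / 2) + 1 := by omega
  · have e : Jm g = ZM.I (g / 2) := by
      conv_lhs => rw [h]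
      exact ZM.Jm_even _
    rw [e]; exact ZM.I_dim _
  · have e : Jm g = ZM.I (g / 2) := by
      conv_lhs => rw [h]
      exact ZM.Jm_odd _
    rw [e]; exact ZM.I_dim _
end

section
/- Fix g ≥ 0 and let E (respectively O) denote the image in ℂ[α,γ]/J_g^- of the ℂ-span of the monomials α^j γ^i with i + j even (respectively i + j odd). Then ℂ[α,γ]/J_g^- = E ⊕ O and dim E = dim O = ½·⌊g/2⌋·(⌊g/2⌋ + 1). (Equivalently, the ℤ/4-graded Poincaré polynomial of J_g^- is ½⌊g/2⌋(⌊g/2⌋+1)·(1 + t²), where α and γ have grading 2 mod 4.) -/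
open MvPolynomial

/-- The image in ℂ[α,γ]/J_g^- of the ℂ-span of the monomials α^j γ^i with i + j even. -/
noncomputable def Em (g : ℕ) : Submodule ℂ (MvPolynomial (Fin 2) ℂ ⧸ Jm g) :=
  Submodule.span ℂ {q | ∃ i j : ℕ, (i + j) % 2 = 0 ∧
    q = Ideal.Quotient.mk (Jm g)
      ((X 0 : MvPolynomial (Fin 2) ℂ) ^ j * (X 1 : MvPolynomial (Fin 2) ℂ) ^ i)}

/-- The image in ℂ[α,γ]/J_g^- of the ℂ-span of the monomials α^j γ^i with i + j odd. -/
noncomputable def Om (g : ℕ) : Submodule ℂ (MvPolynomial (Fin 2) ℂ ⧸ Jm g) :=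
  Submodule.span ℂ {q | ∃ i j : ℕ, (i + j) % 2 = 1 ∧
    q = Ideal.Quotient.mk (Jm g)
      ((X 0 : MvPolynomial (Fin 2) ℂ) ^ j * (X 1 : MvPolynomial (Fin 2) ℂ) ^ i)}

theorem zm_odd (n : ℕ) : zm (2*n+3) = X 0 * zm (2*n+2)
    + C (2 * ((2*n : ℂ) + 2) * ((2*n : ℂ) + 1)) * X 1 * zm (2*n) := by
  rw [zm]; simp

theorem zm_even (n : ℕ) : zm (2*n+4) = X 0 * zm (2*n+3) - C (16 * ((2*n : ℂ) + 3) ^ 2) * zm (2*n+2)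
    + C (2 * ((2*n : ℂ) + 3) * ((2*n : ℂ) + 2)) * X 1 * zm (2*n+1) := by
  have h := zm.eq_4 (2*n+1)
  have h2 : ¬ ((2*n+1) % 2 = 0) := by omega
  rw [if_neg h2] at h
  have e1 : (((2*n+1 : ℕ) : ℂ) + 2) = 2*n+3 := by push_cast; ring
  have e2 : (((2*n+1 : ℕ) : ℂ) + 1) = 2*n+2 := by push_cast; ring
  rw [e1, e2] at h
  exact h

theorem zm_zero : zm 0 = 1 := by rw [zm]
theorem zm_one : zm 1 = X 0 := by rw [zm]
theorem zm_two : zm 2 = X 0 * X 0 - C 16 := by rw [zm, zm_one, zm_zero]; ring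

theorem zm_four : zm 4 = (X 0 * X 0 - C 144) * zm 2 + C 16 * (X 0 * X 1) * zm 0 := by
  have h1 := zm_even 0
  have h2 := zm_odd 0
  norm_num at h1 h2
  rw [h1, h2, zm_one, zm_zero]
  have : (C 16 : MvPolynomial (Fin 2) ℂ) = C 4 + C 12 := by rw [← C_add]; norm_num
  rw [this]
  ring

theorem zm_six (n : ℕ) : zm (2*n+6) = (X 0 * X 0 - C (16 * ((2*n : ℂ) + 5) ^ 2)) * zm (2*n+4)
    + C (16 * ((n:ℂ)+2)^2) * (X 0 * X 1) * zm (2*n+2)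
    + C (16 * ((n:ℂ)+2) * (n+1) * (2*n+5) * (2*n+1)) * (X 1 * X 1) * zm (2*n) := by
  have h1 := zm_even (n+1)
  have h2 := zm_odd (n+1)
  have h3 := zm_odd n
  have e1 : 2*(n+1)+4 = 2*n+6 := by ring
  have e2 : 2*(n+1)+3 = 2*n+5 := by ring
  have e3 : 2*(n+1)+2 = 2*n+4 := by ring
  have e4 : 2*(n+1)+1 = 2*n+3 := by ring
  have e5 : 2*(n+1) = 2*n+2 := by ring
  rw [e1, e2, e3, e4] at h1
  rw [e2, e3, e5] at h2
  rw [h1, h2, h3]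
  push_cast
  simp only [C_mul, C_add, C_pow, map_ofNat, map_natCast, map_one]
  ring

/-- the recursively defined ideal -/
noncomputable def Jp : ℕ → Ideal (MvPolynomial (Fin 2) ℂ)
  | 0 => ⊤
  | (m+1) => Ideal.span {zm (2*m+2)} ⊔ Ideal.span {X 1} * Jp m

theorem zm_mem_Jp (m : ℕ) : zm (2*m) ∈ Jp m := by
  cases m with
  | zero => simp [Jp]
  | succ m => rw [Jp]; exact Ideal.mem_sup_left (Ideal.subset_span rfl)

theorem X1_mul_mem_Jp {m : ℕ} {f : MvPolynomial (Fin 2) ℂ} (hf : f ∈ Jp m) :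
    X 1 * f ∈ Jp (m+1) := by
  rw [Jp]
  exact Ideal.mem_sup_right (Ideal.mul_mem_mul (Ideal.subset_span rfl) hf)

theorem zm_succ_mem_Jp (m : ℕ) : zm (2*m+2) ∈ Jp m := by
  match m with
  | 0 => simp [Jp]
  | 1 =>
    rw [show 2*1+2 = 4 from rfl, zm_four]
    refine add_mem (Ideal.mul_mem_left _ _ (zm_mem_Jp 1)) ?_
    have := X1_mul_mem_Jp (zm_mem_Jp 0)
    convert Ideal.mul_mem_left _ (C 16 * X 0) this using 1
    ring
  | n+2 =>
    rw [show 2*(n+2)+2 = 2*n+6 by ring, zm_six]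
    have h0 := zm_mem_Jp (n+2)
    have h1 := X1_mul_mem_Jp (zm_mem_Jp (n+1))
    have h2 := X1_mul_mem_Jp (X1_mul_mem_Jp (zm_mem_Jp n))
    refine add_mem (add_mem (Ideal.mul_mem_left _ _ h0) ?_) ?_
    · convert Ideal.mul_mem_left _ (C (16 * ((n:ℂ)+2)^2) * X 0) h1 using 1
      ring_nf
    · convert Ideal.mul_mem_left _ (C (16 * ((n:ℂ)+2) * (n+1) * (2*n+5) * (2*n+1))) h2 using 1
      ring_nf

theorem zm_pow_mem_Jp (m i : ℕ) : X 1 ^ i * zm (2*m) ∈ Jp (m+i) := by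
  induction i with
  | zero => simpa using zm_mem_Jp m
  | succ i ih =>
    have := X1_mul_mem_Jp ih
    rw [pow_succ', mul_assoc]
    exact this

theorem zm_mem_Jm (g : ℕ) : zm g ∈ Jm g := Ideal.subset_span (by simp)
theorem zm_mem_Jm1 (g : ℕ) : zm (g+1) ∈ Jm g := Ideal.subset_span (by simp)
theorem zm_mem_Jm2 (g : ℕ) : zm (g+2) ∈ Jm g := Ideal.subset_span (by simp)

theorem of_C_mul_mem {I : Ideal (MvPolynomial (Fin 2) ℂ)} {c : ℂ} (hc : c ≠ 0)
    {f : MvPolynomial (Fin 2) ℂ} (h : C c * f ∈ I) : f ∈ I := by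
  have := I.mul_mem_left (C c⁻¹) h
  rwa [← mul_assoc, ← C_mul, inv_mul_cancel₀ hc, C_1, one_mul] at this

/-- `γ ζ_g ∈ J` as soon as `ζ_{g+1}, ζ_{g+2}, ζ_{g+3} ∈ J` -/
theorem X1_zm_mem (g : ℕ) : X 1 * zm g ∈ Jm (g+1) := by
  have h1 := zm_mem_Jm (g+1)
  have h2 := zm_mem_Jm1 (g+1)
  have h3 := zm_mem_Jm2 (g+1)
  have hc : (2 * ((g : ℂ) + 2) * ((g : ℂ) + 1)) ≠ 0 := by
    have a : ((g:ℂ)+2) ≠ 0 := by exact_mod_cast (by omega : g+2 ≠ 0)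
    have b : ((g:ℂ)+1) ≠ 0 := by exact_mod_cast (by omega : g+1 ≠ 0)
    simp [a, b]
  apply of_C_mul_mem hc
  have h := zm.eq_4 g
  rw [show g+1+2 = g+3 by ring, h] at h3
  rw [show g+1+1 = g+2 by ring] at h2
  split_ifs at h3 with hg
  · have := sub_mem h3 (Ideal.mul_mem_left _ (X 0) h2)
    convert this using 1
    ring
  · have := add_mem (sub_mem h3 (Ideal.mul_mem_left _ (X 0) h2))
      (Ideal.mul_mem_left _ (C (16 * ((g : ℂ) + 2) ^ 2)) h1)
    convert this using 1
    ring

theorem X1_mul_mem_Jm (g : ℕ) {f : MvPolynomial (Fin 2) ℂ} (hf : f ∈ Jm g) :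
    X 1 * f ∈ Jm (g+1) := by
  have : Jm g ≤ Submodule.comap (LinearMap.mulLeft (MvPolynomial (Fin 2) ℂ) (X 1)) (Jm (g+1)) := by
    conv_lhs => rw [Jm]
    rw [Ideal.span_le]
    rintro _ (rfl | rfl | rfl)
    · exact X1_zm_mem g
    · exact Ideal.mul_mem_left _ _ (zm_mem_Jm (g+1))
    · exact Ideal.mul_mem_left _ _ (zm_mem_Jm1 (g+1))
  exact this hf

theorem zm_add3_mem (g : ℕ) : zm (g+3) ∈ Jm g := by
  have h := zm.eq_4 g
  have h0 := zm_mem_Jm g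
  have h1 := zm_mem_Jm1 g
  have h2 := zm_mem_Jm2 g
  rw [h]
  split_ifs
  · exact add_mem (Ideal.mul_mem_left _ _ h2) (Ideal.mul_mem_left _ _ h0)
  · exact add_mem (sub_mem (Ideal.mul_mem_left _ _ h2) (Ideal.mul_mem_left _ _ h1))
      (Ideal.mul_mem_left _ _ h0)

theorem Jm_succ_le (g : ℕ) : Jm (g+1) ≤ Jm g := by
  conv_lhs => rw [Jm]
  rw [Ideal.span_le]
  rintro _ (rfl | rfl | rfl)
  · exact zm_mem_Jm1 g
  · exact zm_mem_Jm2 g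
  · exact zm_add3_mem g

theorem X1_mul_mem_Jm2 (m : ℕ) {f : MvPolynomial (Fin 2) ℂ} (hf : f ∈ Jm (2*m)) :
    X 1 * f ∈ Jm (2*m+2) := by
  have : Jm (2*m) ≤ Submodule.comap (LinearMap.mulLeft (MvPolynomial (Fin 2) ℂ) (X 1))
      (Jm (2*m+2)) := by
    conv_lhs => rw [Jm]
    rw [Ideal.span_le]
    rintro _ (rfl | rfl | rfl)
    · have h1 := zm_mem_Jm1 (2*m+2)
      rw [show 2*m+2+1 = 2*m+3 by ring, zm_odd] at h1
      have hc : (2 * ((2*m : ℂ) + 2) * ((2*m : ℂ) + 1)) ≠ 0 := by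
        have a : ((2*m:ℂ)+2) ≠ 0 := by exact_mod_cast (by omega : 2*m+2 ≠ 0)
        have b : ((2*m:ℂ)+1) ≠ 0 := by exact_mod_cast (by omega : 2*m+1 ≠ 0)
        simp [a, b]
      change X 1 * zm (2*m) ∈ Jm (2*m+2)
      refine of_C_mul_mem hc ?_
      have := sub_mem h1 (Ideal.mul_mem_left _ (X 0) (zm_mem_Jm (2*m+2)))
      rwa [add_sub_cancel_left, mul_assoc] at this
    · exact X1_zm_mem (2*m+1)
    · exact Ideal.mul_mem_left _ _ (zm_mem_Jm (2*m+2))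
  exact this hf

theorem Jm_even (m : ℕ) : Jm (2*m) = Jp m := by
  apply le_antisymm
  · rw [Jm, Ideal.span_le]
    rintro _ (rfl | rfl | rfl)
    · exact zm_mem_Jp m
    · cases m with
      | zero => simp [Jp]
      | succ m =>
        rw [show 2*(m+1)+1 = 2*m+3 by ring, zm_odd]
        refine add_mem (Ideal.mul_mem_left _ _ (zm_mem_Jp (m+1))) ?_
        rw [mul_assoc]
        exact Ideal.mul_mem_left _ _ (X1_mul_mem_Jp (zm_mem_Jp m))
    · exact zm_succ_mem_Jp m
  · induction m with
    | zero =>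
      have : (1 : MvPolynomial (Fin 2) ℂ) ∈ Jm (2*0) := by
        have := zm_mem_Jm 0
        rwa [zm_zero] at this
      rw [(Ideal.eq_top_iff_one _).2 this]
      exact le_top
    | succ m ih =>
      rw [Jp]
      refine sup_le ?_ ?_
      · rw [Ideal.span_le]
        rintro _ rfl
        exact zm_mem_Jm (2*(m+1))
      · intro x hx
        obtain ⟨z, hz, rfl⟩ := Ideal.mem_span_singleton_mul.1 hx
        exact X1_mul_mem_Jm2 _ (ih hz)

/-- the monomial `α^j γ^i`, `q = (j, i)` -/
noncomputable def mon (q : ℕ × ℕ) : MvPolynomial (Fin 2) ℂ := X 0 ^ q.1 * X 1 ^ q.2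

noncomputable def Vs (p w : ℕ) : Submodule ℂ (MvPolynomial (Fin 2) ℂ) :=
  Submodule.span ℂ (mon '' {q | q.1 + 2*q.2 < w ∧ (q.1 + q.2) % 2 = p % 2})

theorem mon_mul_mem {p w : ℕ} {f : MvPolynomial (Fin 2) ℂ} (hf : f ∈ Vs p w) (q : ℕ × ℕ) (p' w' : ℕ)
    (hp : (p + q.1 + q.2) % 2 = p' % 2) (hw : w + q.1 + 2*q.2 ≤ w') :
    mon q * f ∈ Vs p' w' := by
  have : Vs p w ≤ Submodule.comap (LinearMap.mulLeft ℂ (mon q)) (Vs p' w') := by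
    rw [Vs, Submodule.span_le]
    rintro _ ⟨r, ⟨h1, h2⟩, rfl⟩
    refine Submodule.subset_span ⟨(q.1+r.1, q.2+r.2), ⟨?_, ?_⟩, ?_⟩
    · dsimp only; omega
    · dsimp only; omega
    · simp [mon]; ring
  exact this hf

theorem C_mul_mem {V : Submodule ℂ (MvPolynomial (Fin 2) ℂ)} {f : MvPolynomial (Fin 2) ℂ}
    (hf : f ∈ V) (c : ℂ) : C c * f ∈ V := by
  rw [C_mul']; exact V.smul_mem c hf

theorem Vs_mono {p p' w w' : ℕ} (hp : p % 2 = p' % 2) (hw : w ≤ w') {f : MvPolynomial (Fin 2) ℂ}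
    (hf : f ∈ Vs p w) : f ∈ Vs p' w' := by
  have := mon_mul_mem hf (0,0) p' w' (by simpa using hp) (by simpa using hw)
  simpa [mon] using this

theorem zm_lead_aux (n : ℕ) : zm (2*n) - X 0 ^ (2*n) ∈ Vs 0 (2*n) ∧ zm (2*n) ∈ Vs 0 (2*n+1) := by
  suffices h : zm (2*n) - X 0 ^ (2*n) ∈ Vs 0 (2*n) by
    refine ⟨h, ?_⟩
    have h2 : X 0 ^ (2*n) ∈ Vs 0 (2*n+1) :=
      Submodule.subset_span ⟨(2*n, 0), ⟨by dsimp only; omega, by dsimp only; omega⟩, by simp [mon]⟩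
    have := add_mem (Vs_mono (p' := 0) (w' := 2*n+1) rfl (by omega) h) h2
    simpa using this
  induction n using Nat.strong_induction_on with
  | _ n ih =>
  have ih2 : ∀ k < n, zm (2*k) ∈ Vs 0 (2*k+1) := by
    intro k hk
    have h2 : X 0 ^ (2*k) ∈ Vs 0 (2*k+1) :=
      Submodule.subset_span ⟨(2*k, 0), ⟨by dsimp only; omega, by dsimp only; omega⟩, by simp [mon]⟩
    have := add_mem (Vs_mono (p' := 0) (w' := 2*k+1) rfl (by omega) (ih k hk)) h2
    simpa using this
  match n with
  | 0 => simp [zm_zero]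
  | 1 =>
    have h2 : (1 : MvPolynomial (Fin 2) ℂ) ∈ Vs 0 (2*1) :=
      Submodule.subset_span ⟨(0, 0), by simp, by simp [mon]⟩
    have := neg_mem (C_mul_mem h2 16)
    convert this using 1
    rw [show 2*1 = 2 from rfl, zm_two]; ring
  | 2 =>
    have a1 := mon_mul_mem (ih 1 (by omega)) (2,0) 0 4 (by simp) (by simp)
    have a2 := Vs_mono (p' := 0) (w' := 4) rfl (by simp) (ih2 1 (by omega))
    have a3 := mon_mul_mem (ih2 0 (by omega)) (1,1) 0 4 (by simp) (by simp)
    have := add_mem (sub_mem a1 (C_mul_mem a2 144)) (C_mul_mem a3 16)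
    convert this using 1
    rw [show 2*2 = 4 from rfl, zm_four]; simp [mon]; ring
  | n+3 =>
    have a1 := mon_mul_mem (ih (n+2) (by omega)) (2,0) 0 (2*(n+3)) (by simp) (by simp; omega)
    have a2 := Vs_mono (p' := 0) (w' := 2*(n+3)) rfl (by omega) (ih2 (n+2) (by omega))
    have a3 := mon_mul_mem (ih2 (n+1) (by omega)) (1,1) 0 (2*(n+3)) (by simp) (by simp; omega)
    have a4 := mon_mul_mem (ih2 n (by omega)) (0,2) 0 (2*(n+3)) (by simp) (by simp; omega)
    have := add_mem (add_mem (sub_mem a1 (C_mul_mem a2 (16 * ((2*n : ℂ) + 5) ^ 2)))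
      (C_mul_mem a3 (16 * ((n:ℂ)+2)^2)))
      (C_mul_mem a4 (16 * ((n:ℂ)+2) * (n+1) * (2*n+5) * (2*n+1)))
    convert this using 1
    rw [show 2*(n+3) = 2*n+6 by ring, zm_six, show 2*(n+2) = 2*n+4 by ring,
      show 2*(n+1) = 2*n+2 by ring]
    simp only [mon]; ring

theorem zm_lead (n : ℕ) : zm (2*n) - X 0 ^ (2*n) ∈ Vs 0 (2*n) := (zm_lead_aux n).1

/-- reduction of monomials modulo `Jp m` -/
theorem reduce (m p w : ℕ) : Vs p w ≤ Vs p (2*m) ⊔ (Jp m).restrictScalars ℂ := by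
  induction w with
  | zero => rw [Vs]; simp
  | succ w ih =>
    conv_lhs => rw [Vs]
    rw [Submodule.span_le]
    rintro _ ⟨⟨j, i⟩, ⟨h1, h2⟩, rfl⟩
    dsimp only at h1 h2
    by_cases hw : j + 2*i < w
    · exact ih (Submodule.subset_span ⟨(j,i), ⟨hw, h2⟩, rfl⟩)
    by_cases hm : j + 2*i < 2*m
    · exact Submodule.mem_sup_left (Submodule.subset_span ⟨(j,i), ⟨hm, h2⟩, rfl⟩)
    by_cases hi : m ≤ i
    · refine Submodule.mem_sup_right ?_
      have := zm_pow_mem_Jp 0 m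
      rw [zero_add, mul_zero, zm_zero, mul_one] at this
      change mon (j,i) ∈ Jp m
      obtain ⟨t, rfl⟩ := Nat.exists_eq_add_of_le hi
      convert (Jp m).mul_mem_left (X 0 ^ j * X 1 ^ t) this using 1
      simp [mon]; ring
    obtain ⟨n, rfl⟩ := Nat.exists_eq_add_of_le (not_le.1 hi).le
    obtain ⟨t, rfl⟩ : ∃ t, j = 2*n + t := ⟨j - 2*n, by omega⟩
    have a1 := mon_mul_mem (zm_lead n) (t, i) p w (by simp; omega) (by simp; omega)
    have a2 := zm_pow_mem_Jp n i
    rw [add_comm n i] at a2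
    have a3 : mon (t,i) * zm (2*n) ∈ Jp (i+n) := by
      convert (Jp (i+n)).mul_mem_left (X 0 ^ t) a2 using 1
      simp [mon]; ring
    have a4 : mon (t,i) * zm (2*n) ∈ Vs p (2*(i+n)) ⊔ (Jp (i+n)).restrictScalars ℂ :=
      Submodule.mem_sup_right a3
    have := sub_mem a4 (ih a1)
    convert this using 1
    simp [mon]; ring

/-- setting `γ = 0` -/
noncomputable def ev0 : MvPolynomial (Fin 2) ℂ →ₐ[ℂ] Polynomial ℂ := aeval ![Polynomial.X, 0]

theorem ev0_X0 : ev0 (X 0) = Polynomial.X := by simp [ev0]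
theorem ev0_X1 : ev0 (X 1) = 0 := by simp [ev0]
theorem ev0_C (c : ℂ) : ev0 (C c) = Polynomial.C c := by
  simp [ev0, Polynomial.algebraMap_eq]

theorem ev0_zm (n : ℕ) : (ev0 (zm (2*n))).Monic ∧ (ev0 (zm (2*n))).natDegree = 2*n := by
  have key : ∀ c : ℂ, (Polynomial.X^2 - Polynomial.C c).Monic ∧
      (Polynomial.X^2 - Polynomial.C c).natDegree = 2 := fun c =>
    ⟨Polynomial.monic_X_pow_sub_C c (by norm_num), Polynomial.natDegree_X_pow_sub_C⟩
  have step : ∀ n : ℕ, ∃ c : ℂ, ev0 (zm (2*n+2)) = (Polynomial.X^2 - Polynomial.C c) * ev0 (zm (2*n)) := by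
    intro n
    cases n with
    | zero => exact ⟨16, by simp only [mul_zero, zero_add, zm_two, zm_zero, map_sub, map_mul, ev0_X0, ev0_C, map_one]; ring⟩
    | succ n =>
      refine ⟨16 * ((2*n : ℂ) + 3) ^ 2, ?_⟩
      rw [show 2*(n+1)+2 = 2*n+4 by ring, show 2*(n+1) = 2*n+2 by ring, zm_even, zm_odd]
      simp only [map_sub, map_add, map_mul, ev0_X0, ev0_X1, ev0_C]
      ring
  induction n with
  | zero => simp [zm_zero]
  | succ n ih =>
    obtain ⟨c, hc⟩ := step n
    rw [show 2*(n+1) = 2*n+2 by ring, hc]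
    refine ⟨(key c).1.mul ih.1, ?_⟩
    rw [(key c).1.natDegree_mul ih.1, (key c).2, ih.2]; ring

theorem ev0_sub_dvd (f : MvPolynomial (Fin 2) ℂ) :
    X 1 ∣ f - Polynomial.aeval (X 0 : MvPolynomial (Fin 2) ℂ) (ev0 f) := by
  induction f using MvPolynomial.induction_on with
  | C a => rw [ev0_C]; simp [MvPolynomial.algebraMap_eq]
  | add f g hf hg =>
    rw [map_add, map_add]
    convert dvd_add hf hg using 1
    ring
  | mul_X f n hf =>
    fin_cases n
    · simp only [Fin.zero_eta, map_mul, ev0_X0, Polynomial.aeval_X]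
      rw [← sub_mul]
      exact Dvd.dvd.mul_right hf _
    · simp only [Fin.mk_one, map_mul, ev0_X1, map_zero, mul_zero, sub_zero]
      exact dvd_mul_left _ _

theorem ev0_eq_zero {f : MvPolynomial (Fin 2) ℂ} (h : ev0 f = 0) : ∃ g, f = X 1 * g := by
  have := ev0_sub_dvd f
  rw [h, map_zero, sub_zero] at this
  exact this

noncomputable def Ws (m : ℕ) : Submodule ℂ (MvPolynomial (Fin 2) ℂ) :=
  Submodule.span ℂ (mon '' {q | q.1 + 2*q.2 < 2*m})

theorem Ws_split (m : ℕ) {w : MvPolynomial (Fin 2) ℂ} (hw : w ∈ Ws (m+1)) :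
    ∃ P : Polynomial ℂ, P.degree < ((2*m+2 : ℕ) : WithBot ℕ) ∧ ∃ w' ∈ Ws m,
      w = Polynomial.aeval (X 0 : MvPolynomial (Fin 2) ℂ) P + X 1 * w' := by
  induction hw using Submodule.span_induction with
  | mem x hx =>
    obtain ⟨⟨j, i⟩, h, rfl⟩ := hx
    simp only [Set.mem_ofPred_eq] at h
    cases i with
    | zero =>
      refine ⟨Polynomial.X ^ j, ?_, 0, zero_mem _, by simp [mon]⟩
      rw [Polynomial.degree_X_pow]
      exact_mod_cast (by omega)
    | succ i =>
      refine ⟨0, by rw [Polynomial.degree_zero]; exact WithBot.bot_lt_coe _, mon (j,i), Submodule.subset_span ⟨(j,i), ?_, rfl⟩, ?_⟩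
      · simp only [Set.mem_ofPred_eq]; omega
      · simp [mon]; ring
  | zero =>
    exact ⟨0, by rw [Polynomial.degree_zero]; exact WithBot.bot_lt_coe _, 0, zero_mem _, by simp⟩
  | add x y _ _ hx hy =>
    obtain ⟨P, hP, u, hu, rfl⟩ := hx
    obtain ⟨Q, hQ, v, hv, rfl⟩ := hy
    refine ⟨P+Q, lt_of_le_of_lt (Polynomial.degree_add_le _ _) (max_lt hP hQ), u+v, add_mem hu hv, ?_⟩
    rw [map_add]; ring
  | smul c x _ hx =>
    obtain ⟨P, hP, u, hu, rfl⟩ := hx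
    refine ⟨c • P, lt_of_le_of_lt (Polynomial.degree_smul_le _ _) hP, c • u, Submodule.smul_mem _ _ hu, ?_⟩
    rw [map_smul, smul_add, mul_smul_comm]

theorem ev0_aeval (P : Polynomial ℂ) :
    ev0 (Polynomial.aeval (X 0 : MvPolynomial (Fin 2) ℂ) P) = P := by
  rw [← Polynomial.aeval_algHom_apply, ev0_X0, Polynomial.aeval_X_left_apply]

theorem indep_aux (m : ℕ) : ∀ w ∈ Ws m, w ∈ Jp m → w = 0 := by
  induction m with
  | zero =>
    intro w hw _
    simpa [Ws] using hw
  | succ m ih =>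
    intro w hw hJ
    obtain ⟨P, hP, w', hw', rfl⟩ := Ws_split m hw
    rw [Jp] at hJ
    obtain ⟨x, hx, y, hy, hxy⟩ := Submodule.mem_sup.1 hJ
    obtain ⟨a, rfl⟩ := Ideal.mem_span_singleton'.1 hx
    obtain ⟨z, hz, rfl⟩ := Ideal.mem_span_singleton_mul.1 hy
    have h0 := congrArg ev0 hxy
    simp only [map_add, map_mul, ev0_X1, zero_mul, add_zero, ev0_aeval] at h0
    obtain ⟨mon1, deg1⟩ := ev0_zm (m+1)
    rw [show 2*(m+1) = 2*m+2 by ring] at mon1 deg1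
    have ha : ev0 a = 0 := by
      by_contra hne
      have hd := Polynomial.degree_mul (p := ev0 a) (q := ev0 (zm (2*m+2)))
      rw [h0, Polynomial.degree_eq_natDegree mon1.ne_zero, deg1,
        Polynomial.degree_eq_natDegree hne] at hd
      rw [hd] at hP
      have : (ev0 a).natDegree + (2*m+2) < 2*m+2 := by exact_mod_cast hP
      omega
    have hP0 : P = 0 := by rw [← h0, ha, zero_mul]
    obtain ⟨a', rfl⟩ := ev0_eq_zero ha
    subst hP0
    rw [map_zero, zero_add] at hxy ⊢
    have hc : a' * zm (2*m+2) + z = w' := by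
      apply mul_left_cancel₀ (X_ne_zero (R := ℂ) (1 : Fin 2))
      rw [← hxy]; ring
    have hw0 : w' = 0 := by
      apply ih w' hw'
      rw [← hc]
      exact add_mem (Ideal.mul_mem_left _ _ (zm_succ_mem_Jp m)) hz
    rw [hw0, mul_zero]

theorem mon_eq (q : ℕ × ℕ) :
    mon q = monomial (Finsupp.single 0 q.1 + Finsupp.single 1 q.2) (1:ℂ) := by
  rw [mon, X_pow_eq_monomial, X_pow_eq_monomial, monomial_mul, one_mul]

theorem mon_indep : LinearIndependent ℂ mon := by
  have h := (basisMonomials (Fin 2) ℂ).linearIndependent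
  have := h.comp (fun q : ℕ × ℕ => (Finsupp.single 0 q.1 + Finsupp.single 1 q.2 : Fin 2 →₀ ℕ)) ?_
  · have e : mon = (⇑(basisMonomials (Fin 2) ℂ) ∘ fun q : ℕ × ℕ =>
        (Finsupp.single 0 q.1 + Finsupp.single 1 q.2 : Fin 2 →₀ ℕ)) := by
      ext1 q
      simp [mon_eq]
    rw [e]
    exact this
  · intro q r hqr
    have h0 := DFunLike.congr_fun hqr 0
    have h1 := DFunLike.congr_fun hqr 1
    simp at h0 h1
    exact Prod.ext h0 h1

theorem mon_span (p : ℕ × ℕ → Prop) (f : MvPolynomial (Fin 2) ℂ) :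
    f ∈ Submodule.span ℂ (mon '' {q | p q}) ⊔ Submodule.span ℂ (mon '' {q | ¬ p q}) := by
  induction f using MvPolynomial.induction_on' with
  | monomial u a =>
    have : monomial u a = a • mon (u 0, u 1) := by
      rw [mon_eq, smul_monomial, smul_eq_mul, mul_one]
      have e : u = Finsupp.single 0 (u 0) + Finsupp.single 1 (u 1) := by
        ext i; fin_cases i <;> simp
      rw [← e]
    rw [this]
    refine Submodule.smul_mem _ _ ?_
    by_cases h : p (u 0, u 1)
    · exact Submodule.mem_sup_left (Submodule.subset_span ⟨_, h, rfl⟩)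
    · exact Submodule.mem_sup_right (Submodule.subset_span ⟨_, h, rfl⟩)
  | add f g hf hg => exact add_mem hf hg

/-- the index sets -/
def idx (p m : ℕ) : Finset (ℕ × ℕ) :=
  (Finset.range (2*m) ×ˢ Finset.range m).filter
    (fun q => q.1 + 2*q.2 < 2*m ∧ (q.1 + q.2) % 2 = p % 2)

theorem mem_idx {p m : ℕ} {q : ℕ × ℕ} :
    q ∈ idx p m ↔ q.1 + 2*q.2 < 2*m ∧ (q.1 + q.2) % 2 = p % 2 := by
  simp only [idx, Finset.mem_filter, Finset.mem_product, Finset.mem_range]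
  constructor
  · exact fun h => h.2
  · intro h; refine ⟨⟨?_, ?_⟩, h⟩ <;> omega

theorem card_idx (p m : ℕ) : (idx p m).card = m * (m+1) / 2 := by
  have key : ∀ m p, 2 * (idx p m).card = m * (m+1) := by
    intro m
    induction m with
    | zero => intro p; simp [idx]
    | succ m ih =>
      intro p
      have : idx p (m+1) = (Finset.range (m+1)).image (fun k => (2*k + p%2, 0)) ∪
          (idx (p+1) m).image (fun q => (q.1, q.2+1)) := by
        ext ⟨j, i⟩
        simp only [mem_idx, Finset.mem_union, Finset.mem_image, Finset.mem_range, Prod.mk.injEq,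
          Prod.exists]
        constructor
        · rintro ⟨h1, h2⟩
          cases i with
          | zero => left; exact ⟨j/2, by omega, by omega, rfl⟩
          | succ i => right; exact ⟨j, i, ⟨by omega, by omega⟩, rfl, rfl⟩
        · rintro (⟨k, hk, rfl, rfl⟩ | ⟨a, b, ⟨h1, h2⟩, rfl, rfl⟩)
          · constructor <;> omega
          · constructor <;> omega
      rw [this, Finset.card_union_of_disjoint, Finset.card_image_of_injective,
        Finset.card_image_of_injective, mul_add, ih]
      · simp; ring
      · intro q r h
        simp only [Prod.mk.injEq, add_left_inj] at h
        exact Prod.ext h.1 h.2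
      · intro q r h
        simp only [Prod.mk.injEq] at h
        omega
      · rw [Finset.disjoint_left]
        intro q h1 h2
        simp only [Finset.mem_image, Finset.mem_range] at h1 h2
        obtain ⟨k, _, rfl⟩ := h1
        obtain ⟨r, _, h⟩ := h2
        simp at h
  have := key m p
  omega

noncomputable def mkL (J : Ideal (MvPolynomial (Fin 2) ℂ)) :
    MvPolynomial (Fin 2) ℂ →ₗ[ℂ] (MvPolynomial (Fin 2) ℂ ⧸ J) :=
  (Ideal.Quotient.mkₐ ℂ J).toLinearMap

theorem mkL_apply (J : Ideal (MvPolynomial (Fin 2) ℂ)) (f) :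
    mkL J f = Ideal.Quotient.mk J f := rfl

theorem span_all (J : Ideal (MvPolynomial (Fin 2) ℂ)) (m p : ℕ) (hJ : J = Jp m) :
    Submodule.span ℂ ((mkL J ∘ mon) '' {q | (q.1 + q.2) % 2 = p % 2}) =
      Submodule.span ℂ ((mkL J ∘ mon) '' (idx p m : Set (ℕ × ℕ))) := by
  apply le_antisymm
  · rw [Submodule.span_le]
    rintro _ ⟨q, hq, rfl⟩
    have h1 : mon q ∈ Vs p (q.1 + 2*q.2 + 1) := Submodule.subset_span ⟨q, ⟨by omega, hq⟩, rfl⟩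
    obtain ⟨y, hy, z, hz, hyz⟩ := Submodule.mem_sup.1 (reduce m p _ h1)
    have h2 : (mkL J ∘ mon) q = mkL J y := by
      rw [Function.comp_apply, ← hyz, map_add]
      have : mkL J z = 0 := by
        rw [mkL_apply]; exact Ideal.Quotient.eq_zero_iff_mem.2 (hJ ▸ hz)
      rw [this, add_zero]
    rw [h2, Set.image_comp, ← Submodule.map_span]
    refine Submodule.mem_map_of_mem ?_
    have e : (idx p m : Set (ℕ × ℕ)) = {q | q.1 + 2*q.2 < 2*m ∧ (q.1 + q.2) % 2 = p % 2} := by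
      ext q; simp [mem_idx]
    rw [e]
    exact hy
  · refine Submodule.span_mono (Set.image_mono ?_)
    intro q hq
    exact (mem_idx.1 hq).2

theorem indep (J : Ideal (MvPolynomial (Fin 2) ℂ)) (m : ℕ) (hJ : J = Jp m) :
    LinearIndependent ℂ (fun q : {q : ℕ × ℕ // q.1 + 2*q.2 < 2*m} => mkL J (mon q)) := by
  have h := mon_indep.comp (fun q : {q : ℕ × ℕ // q.1 + 2*q.2 < 2*m} => (q : ℕ × ℕ))
    Subtype.val_injective
  refine h.map (f := mkL J) ?_
  rw [Submodule.disjoint_def]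
  intro x hx hk
  apply indep_aux m x
  · convert hx using 2
    rw [Ws]
    congr 1
    ext y; simp
  · rw [LinearMap.mem_ker, mkL_apply, Ideal.Quotient.eq_zero_iff_mem, hJ] at hk
    exact hk

theorem main_of_eq (g m : ℕ) (hJ : Jm g = Jp m) :
    Em g ⊓ Om g = ⊥ ∧ Em g ⊔ Om g = ⊤ ∧
    Module.finrank ℂ (Em g) = m * (m + 1) / 2 ∧
    Module.finrank ℂ (Om g) = m * (m + 1) / 2 := by
  have hE : Em g = Submodule.span ℂ ((mkL (Jm g) ∘ mon) '' {q | (q.1 + q.2) % 2 = 0 % 2}) := by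
    rw [Em]; congr 1; ext y
    constructor
    · rintro ⟨i, j, h, rfl⟩
      exact ⟨(j,i), by simp only [Set.mem_ofPred_eq]; omega, rfl⟩
    · rintro ⟨⟨j,i⟩, h, rfl⟩
      exact ⟨i, j, by simp only [Set.mem_ofPred_eq] at h; omega, rfl⟩
  have hO : Om g = Submodule.span ℂ ((mkL (Jm g) ∘ mon) '' {q | (q.1 + q.2) % 2 = 1 % 2}) := by
    rw [Om]; congr 1; ext y
    constructor
    · rintro ⟨i, j, h, rfl⟩
      exact ⟨(j,i), by simp only [Set.mem_ofPred_eq]; omega, rfl⟩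
    · rintro ⟨⟨j,i⟩, h, rfl⟩
      exact ⟨i, j, by simp only [Set.mem_ofPred_eq] at h; omega, rfl⟩
  have hI := indep (Jm g) m hJ
  have im : ∀ p, (mkL (Jm g) ∘ mon) '' (idx p m : Set (ℕ × ℕ)) =
      (fun q : {q : ℕ × ℕ // q.1 + 2*q.2 < 2*m} => mkL (Jm g) (mon q)) ''
        {q | (q.1.1 + q.1.2) % 2 = p % 2} := by
    intro p
    ext y
    constructor
    · rintro ⟨q, h, rfl⟩
      have := mem_idx.1 (Finset.mem_coe.1 h)
      exact ⟨⟨q, this.1⟩, this.2, rfl⟩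
    · rintro ⟨⟨q, hq⟩, h, rfl⟩
      exact ⟨q, Finset.mem_coe.2 (mem_idx.2 ⟨hq, h⟩), rfl⟩
  have fr : ∀ p, Module.finrank ℂ
      (Submodule.span ℂ ((mkL (Jm g) ∘ mon) '' (idx p m : Set (ℕ × ℕ)))) = m * (m+1) / 2 := by
    intro p
    have h := hI.comp (fun q : idx p m => (⟨q.1, (mem_idx.1 q.2).1⟩ :
      {q : ℕ × ℕ // q.1 + 2*q.2 < 2*m})) (by
        intro a b hab
        simp only [Subtype.mk.injEq] at hab
        exact Subtype.ext hab)
    have h2 := finrank_span_eq_card h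
    rw [Fintype.card_coe, card_idx] at h2
    rw [← h2]
    have e : (mkL (Jm g) ∘ mon) '' (idx p m : Set (ℕ × ℕ)) = Set.range
        ((fun q : {q : ℕ × ℕ // q.1 + 2*q.2 < 2*m} => mkL (Jm g) (mon q)) ∘
          (fun q : idx p m => ⟨q.1, (mem_idx.1 q.2).1⟩)) := by
      ext y
      constructor
      · rintro ⟨q, h, rfl⟩
        exact ⟨⟨q, Finset.mem_coe.1 h⟩, rfl⟩
      · rintro ⟨⟨q, h⟩, rfl⟩
        exact ⟨q, Finset.mem_coe.2 h, rfl⟩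
    rw [e]
  refine ⟨?_, ?_, ?_, ?_⟩
  · rw [hE, hO, span_all _ m 0 hJ, span_all _ m 1 hJ, im, im, ← disjoint_iff]
    apply hI.disjoint_span_image
    rw [Set.disjoint_left]
    intro q h1 h2
    simp only [Set.mem_ofPred_eq] at h1 h2
    omega
  · rw [hE, hO, Set.image_comp, Set.image_comp, ← Submodule.map_span, ← Submodule.map_span,
      ← Submodule.map_sup, eq_top_iff]
    intro y _
    obtain ⟨f, rfl⟩ := Ideal.Quotient.mk_surjective y
    refine ⟨f, ?_, rfl⟩
    have := mon_span (fun q => (q.1 + q.2) % 2 = 0 % 2) f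
    have e : {q : ℕ × ℕ | ¬ (q.1 + q.2) % 2 = 0 % 2} = {q | (q.1 + q.2) % 2 = 1 % 2} := by
      ext q; simp only [Set.mem_ofPred_eq]; omega
    rw [e] at this
    exact this
  · rw [hE, span_all _ m 0 hJ, fr]
  · rw [hO, span_all _ m 1 hJ, fr]

theorem seq_contra (m : ℕ) (l : ℂ) (x y : ℕ → ℂ) (h0 : y 0 = l * x 0) (h0' : l * y 0 = 16 * x 0)
    (h1 : ∀ k < m, l * x (k+1) = y (k+1) - 2 * (2*k+2) * (2*k+1) * x k)
    (h2 : ∀ k < m, l * y (k+1) = 16 * (2*k+3)^2 * x (k+1) - 2 * (2*k+3) * (2*k+2) * y k)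
    (hx : x m = 1) (hy : y m = 0) : False := by
  have start : ∀ k : ℕ, y k = l * x k → l * y k = 16 * (2*k+1)^2 * x k →
      (x k = 0 ∧ y k = 0) ∨ ∃ k0 ≤ k, ∃ e : ℂ, (e = 1 ∨ e = -1) ∧ l = e * (4 * (2*k0+1)) ∧
        ∃ p q : ℝ, 0 < p ∧ 0 < q ∧ ∃ u : ℂ, u ≠ 0 ∧ x k = p * u ∧ y k = q * (e * u) := by
    intro k a b
    by_cases hz : x k = 0
    · left; exact ⟨hz, by rw [a, hz, mul_zero]⟩
    right
    have hl : l^2 = (4*(2*k+1))^2 := by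
      apply mul_right_cancel₀ hz
      rw [a] at b
      linear_combination b
    rcases sq_eq_sq_iff_eq_or_eq_neg.1 hl with hl | hl
    · refine ⟨k, le_rfl, 1, Or.inl rfl, by rw [hl]; ring, 1, 4*(2*k+1), one_pos, by positivity, x k, hz, by simp, ?_⟩
      rw [a, hl]; push_cast; ring
    · refine ⟨k, le_rfl, -1, Or.inr rfl, by rw [hl]; ring, 1, 4*(2*k+1), one_pos, by positivity, x k, hz, by simp, ?_⟩
      rw [a, hl]; push_cast; ring
  have P : ∀ k ≤ m, (x k = 0 ∧ y k = 0) ∨ ∃ k0 ≤ k, ∃ e : ℂ, (e = 1 ∨ e = -1) ∧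
      l = e * (4 * (2*k0+1)) ∧
        ∃ p q : ℝ, 0 < p ∧ 0 < q ∧ ∃ u : ℂ, u ≠ 0 ∧ x k = p * u ∧ y k = q * (e * u) := by
    intro k
    induction k with
    | zero =>
      intro _
      apply start 0 h0
      rw [h0']; simp
    | succ k ih =>
      intro hk
      have a1 := h1 k (by omega)
      have a2 := h2 k (by omega)
      rcases ih (by omega) with ⟨z1, z2⟩ | ⟨k0, hk0, e, he, hl, p, q, hp, hq, u, hu, hxu, hyu⟩
      · apply start (k+1)
        · rw [z1] at a1; linear_combination -a1
        · rw [z2] at a2; push_cast; linear_combination a2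
      · right
        have ee : e * e = 1 := by rcases he with rfl | rfl <;> ring
        have hk0' : (k0:ℝ) ≤ k := by exact_mod_cast hk0
        have hk00 : (0:ℝ) ≤ k0 := by positivity
        have hD : (0:ℝ) < 16*(2*k+3)^2 - 16*(2*k0+1)^2 := by nlinarith
        set D : ℝ := 16*(2*k+3)^2 - 16*(2*k0+1)^2 with hDdef
        set N : ℝ := 4*(2*k0+1) * (2 * (2*k+2) * (2*k+1)) * p + 2*(2*k+3)*(2*k+2) * q with hN
        have hNpos : 0 < N := by positivity
        have hDc : (D:ℂ) ≠ 0 := by exact_mod_cast hD.ne'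
        have hDv : (D:ℂ) = 16*(2*k+3)^2 - 16*(2*k0+1)^2 := by rw [hDdef]; push_cast; ring
        have hNv : (N:ℂ) = 4*(2*k0+1) * (2 * (2*k+2) * (2*k+1)) * p + 2*(2*k+3)*(2*k+2) * q := by
          rw [hN]; push_cast; ring
        have hx1 : x (k+1) = ((N/D : ℝ) : ℂ) * (e * u) := by
          push_cast
          rw [div_mul_eq_mul_div, eq_div_iff hDc, hDv, hNv]
          rw [hxu] at a1
          rw [hyu] at a2
          have a3 : y (k+1) = l * x (k+1) + 2 * (2*k+2) * (2*k+1) * (p * u) := by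
            rw [a1]; ring
          rw [a3, hl] at a2
          linear_combination -a2 + (16*(2*k0+1)^2 * x (k+1)) * ee
        refine ⟨k0, by omega, e, he, hl, N/D, 4*(2*k0+1)*(N/D) + 2*(2*k+2)*(2*k+1)*p,
          by positivity, by positivity, e*u, ?_, hx1, ?_⟩
        · refine mul_ne_zero ?_ hu
          rintro rfl; simp at ee
        · have a3 : y (k+1) = l * x (k+1) + 2 * (2*k+2) * (2*k+1) * (p * u) := by
            rw [← hxu, a1]; ring
          rw [a3, hx1, hl]
          push_cast
          linear_combination (-(2*(2*k+2)*(2*k+1)*p*u)) * ee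
  rcases P m le_rfl with ⟨z, _⟩ | ⟨k0, hk0, e, he, hl, p, q, hp, hq, u, hu, hxu, hyu⟩
  · rw [z] at hx; exact zero_ne_one hx
  · rw [hy] at hyu
    have hqc : (q:ℂ) ≠ 0 := by exact_mod_cast hq.ne'
    have hec : e ≠ 0 := by rcases he with rfl | rfl <;> simp
    exact mul_ne_zero hqc (mul_ne_zero hec hu) hyu.symm

theorem Jm_even_rep (m : ℕ) {f : MvPolynomial (Fin 2) ℂ} (hf : f ∈ Jm (2*m)) :
    ∃ a, f - a * zm (2*m) ∈ Jm (2*m+1) := by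
  rw [Jm] at hf
  obtain ⟨a, z, hz, rfl⟩ := Ideal.mem_span_insert.1 hf
  refine ⟨a, ?_⟩
  rw [add_sub_cancel_left]
  have : Ideal.span {zm (2*m+1), zm (2*m+2)} ≤ Jm (2*m+1) := by
    rw [Ideal.span_le]
    rintro _ (rfl | rfl)
    · exact zm_mem_Jm (2*m+1)
    · exact zm_mem_Jm1 (2*m+1)
  exact this hz

theorem zm_even_mem_Jm_odd (m : ℕ) : zm (2*m) ∈ Jm (2*m+1) := by
  by_contra hcon
  have memE : ∀ k ≤ m, X 1 ^ (m-k) * zm (2*k) ∈ Jm (2*m) := by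
    intro k hk
    have := zm_pow_mem_Jp k (m-k)
    rw [Nat.add_sub_cancel' hk] at this
    rwa [Jm_even]
  have memO : ∀ k ≤ m, X 1 ^ (m-k) * zm (2*k+1) ∈ Jm (2*m) := by
    intro k hk
    cases k with
    | zero =>
      have := (Jm (2*m)).mul_mem_left (X 0) (memE 0 hk)
      convert this using 1
      rw [mul_zero, zero_add, zm_one, zm_zero]; ring
    | succ k =>
      have t1 := (Jm (2*m)).mul_mem_left (X 0) (memE (k+1) hk)
      have t2 := (Jm (2*m)).mul_mem_left (C (2 * ((2*k : ℂ) + 2) * ((2*k : ℂ) + 1)))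
        (memE k (by omega))
      have := add_mem t1 t2
      convert this using 1
      rw [show 2*(k+1)+1 = 2*k+3 by ring, zm_odd, show m - k = (m-(k+1)) + 1 by omega,
        show 2*(k+1) = 2*k+2 by ring]
      ring
  have memG : ∀ k ≤ m, X 1 ^ (m-k) * zm (2*k+2) ∈ Jm (2*m+1) := by
    intro k hk
    rcases Nat.lt_or_ge k m with h | h
    · have := X1_mul_mem_Jm (2*m) (memE (k+1) h)
      convert this using 1
      rw [show m - k = (m-(k+1)) + 1 by omega, show 2*(k+1) = 2*k+2 by ring]
      ring
    · obtain rfl : k = m := le_antisymm hk h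
      exact Ideal.mul_mem_left _ _ (zm_mem_Jm1 (2*k+1))
  have exA : ∀ k, ∃ a, k ≤ m → X 1 ^ (m-k) * zm (2*k) - a * zm (2*m) ∈ Jm (2*m+1) := by
    intro k
    by_cases hk : k ≤ m
    · obtain ⟨a, ha⟩ := Jm_even_rep m (memE k hk)
      exact ⟨a, fun _ => ha⟩
    · exact ⟨0, fun h => absurd h hk⟩
  have exB : ∀ k, ∃ a, k ≤ m → X 1 ^ (m-k) * zm (2*k+1) - a * zm (2*m) ∈ Jm (2*m+1) := by
    intro k
    by_cases hk : k ≤ m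
    · obtain ⟨a, ha⟩ := Jm_even_rep m (memO k hk)
      exact ⟨a, fun _ => ha⟩
    · exact ⟨0, fun h => absurd h hk⟩
  choose a ha using exA
  choose b hb using exB
  set I : Ideal (MvPolynomial (Fin 2) ℂ) :=
    Submodule.comap (LinearMap.mulRight (MvPolynomial (Fin 2) ℂ) (zm (2*m))) (Jm (2*m+1)) with hI
  have memI : ∀ f, f * zm (2*m) ∈ Jm (2*m+1) → f ∈ I := fun f hf => hf
  have hIne : I ≠ ⊤ := by
    intro h
    have : (1 : MvPolynomial (Fin 2) ℂ) ∈ I := by rw [h]; trivial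
    have h2 : 1 * zm (2*m) ∈ Jm (2*m+1) := this
    rw [one_mul] at h2
    exact hcon h2
  obtain ⟨M, hM, hIM⟩ := Ideal.exists_le_maximal I hIne
  obtain ⟨pt, rfl⟩ := (isMaximal_iff_eq_vanishingIdeal_singleton (K := ℂ)).1 hM
  have key : ∀ f, f * zm (2*m) ∈ Jm (2*m+1) → aeval pt f = (0:ℂ) := fun f hf =>
    (mem_vanishingIdeal_singleton_iff pt f).1 (hIM (memI f hf))
  have aC : ∀ c : ℂ, aeval pt (C c : MvPolynomial (Fin 2) ℂ) = c := fun c => by simp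
  have aCm : ∀ (c : ℂ) (f : MvPolynomial (Fin 2) ℂ), aeval pt (C c * f) = c * aeval pt f :=
    fun c f => by rw [map_mul (aeval pt), aC]
  have aXm : ∀ (f : MvPolynomial (Fin 2) ℂ), aeval pt (X 0 * f) = pt 0 * aeval pt f :=
    fun f => by rw [map_mul (aeval pt), aeval_X]
  refine seq_contra m (pt 0) (fun k => aeval pt (a k)) (fun k => aeval pt (b k)) ?_ ?_ ?_ ?_ ?_ ?_
  · have A := ha 0 (by omega)
    have B := hb 0 (by omega)
    have := key (b 0 - X 0 * a 0) (by
      convert sub_mem ((Jm (2*m+1)).mul_mem_left (X 0) A) B using 1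
      rw [mul_zero, zero_add, zm_one, zm_zero]; ring)
    simp only [map_sub, map_mul, aeval_X] at this
    linear_combination this
  · have A := ha 0 (by omega)
    have B := hb 0 (by omega)
    have G := memG 0 (by omega)
    have := key (X 0 * b 0 - C 16 * a 0) (by
      convert add_mem (sub_mem ((Jm (2*m+1)).mul_mem_left (C 16) A)
        ((Jm (2*m+1)).mul_mem_left (X 0) B)) G using 1
      rw [mul_zero, zero_add, zero_add, zm_one, zm_zero, zm_two]; ring)
    simp only [map_sub, map_mul, aeval_X, aC] at this
    linear_combination this
  · intro k hk
    have A1 := ha (k+1) hk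
    have B1 := hb (k+1) hk
    have A0 := ha k hk.le
    have := key (X 0 * a (k+1) - b (k+1) + C (2 * ((2*k : ℂ) + 2) * ((2*k : ℂ) + 1)) * a k) (by
      convert sub_mem (sub_mem B1 ((Jm (2*m+1)).mul_mem_left (X 0) A1))
        ((Jm (2*m+1)).mul_mem_left (C (2 * ((2*k : ℂ) + 2) * ((2*k : ℂ) + 1))) A0) using 1
      rw [show 2*(k+1)+1 = 2*k+3 by ring, zm_odd, show m - k = (m-(k+1)) + 1 by omega,
        show 2*(k+1) = 2*k+2 by ring]
      ring)
    rw [map_add, map_sub, aXm, aCm] at this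
    linear_combination this
  · intro k hk
    have A1 := ha (k+1) hk
    have B1 := hb (k+1) hk
    have B0 := hb k hk.le
    have G := memG (k+1) hk
    have := key (X 0 * b (k+1) - C (16 * ((2*k : ℂ) + 3) ^ 2) * a (k+1)
        + C (2 * ((2*k : ℂ) + 3) * ((2*k : ℂ) + 2)) * b k) (by
      convert add_mem (sub_mem (sub_mem ((Jm (2*m+1)).mul_mem_left
        (C (16 * ((2*k : ℂ) + 3) ^ 2)) A1) ((Jm (2*m+1)).mul_mem_left (X 0) B1))
        ((Jm (2*m+1)).mul_mem_left (C (2 * ((2*k : ℂ) + 3) * ((2*k : ℂ) + 2))) B0)) G using 1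
      rw [show 2*(k+1)+1 = 2*k+3 by ring, show m - k = (m-(k+1)) + 1 by omega,
        show 2*(k+1)+2 = 2*k+4 by ring, zm_even,
        show 2*(k+1) = 2*k+2 by ring]
      ring)
    rw [map_add, map_sub, aXm, aCm, aCm] at this
    linear_combination this
  · have A := ha m le_rfl
    rw [Nat.sub_self, pow_zero] at A
    have := key (1 - a m) (by convert A using 1; ring)
    rw [map_sub, map_one] at this
    linear_combination -this
  · have B := hb m le_rfl
    rw [Nat.sub_self, pow_zero, one_mul] at B
    exact key (b m) (by
      convert sub_mem (zm_mem_Jm (2*m+1)) B using 1; ring)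

theorem Jm_odd (m : ℕ) : Jm (2*m+1) = Jp m := by
  rw [← Jm_even]
  apply le_antisymm (Jm_succ_le _)
  conv_lhs => rw [Jm]
  rw [Ideal.span_le]
  rintro _ (rfl | rfl | rfl)
  · exact zm_even_mem_Jm_odd m
  · exact zm_mem_Jm (2*m+1)
  · exact zm_mem_Jm1 (2*m+1)

theorem Jm_eq (g : ℕ) : Jm g = Jp (g/2) := by
  rcases Nat.even_or_odd' g with ⟨m, rfl | rfl⟩
  · rw [Jm_even]; congr 1; omega
  · rw [Jm_odd]; congr 1; omega

/-- ℂ[α,γ]/J_g^- = E ⊕ O, with dim E = dim O = ½⌊g/2⌋(⌊g/2⌋+1). -/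
theorem Jm_even_odd_decomposition (g : ℕ) :
    Em g ⊓ Om g = ⊥ ∧ Em g ⊔ Om g = ⊤ ∧
    Module.finrank ℂ (Em g) = (g / 2) * (g / 2 + 1) / 2 ∧
    Module.finrank ℂ (Om g) = (g / 2) * (g / 2 + 1) / 2 := by
  exact main_of_eq g (g/2) (Jm_eq g)
end
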